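/- Let X be a Peano continuum having uncountably many local cut points. Then X is a topological fractal; moreover there exists a witnessing family consisting of at most three maps (so the witnessing number of X is at most three). -/

import Mathlib

/-- A family `F` of self-maps of a metric space `X` is topologically contractive if for
every `ε > 0` there is `k` such that every composition of `k` maps from `F` has image of
diameter less than `ε`. -/
def TopContractive {X : Type*} [MetricSpace X] (F : Set (X → X)) : Prop :=
  ∀ ε > (0 : ℝ), ∃ k : ℕ, ∀ l : List (X → X), (∀ f ∈ l, f ∈ F) → l.length = k →
    Metric.diam (Set.range (l.foldr (· ∘ ·) id)) < ε

/-- `x` is a local cut point of `X` if it has a connected neighborhood `U` such that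
`U \ {x}` is not connected. -/
def IsLocalCutPoint {X : Type*} [TopologicalSpace X] (x : X) : Prop :=
  ∃ U : Set X, U ∈ nhds x ∧ IsConnected U ∧ ¬ IsPreconnected (U \ {x})

/-!
Some connected open set `V` has uncountably many cut points. As `V` has a countable dense subset,
uncountably many of them separate the same two points `p` and `q`, and these are linearly ordered by
their sides containing `p`. A chain of such sides indexed by the rationals has a Urysohn function
`g` on `V`, any two levels of which are separated by a single point. Since `V` is locally connected
and second countable, all but countably many levels of `g` are single points, and a short compact
band of levels is a generalized arc: an arc in which countably many points are replaced by
nondegenerate fibers. Each fiber is a retract of the band.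

After rescaling, the arc has length `1`. A curve can run along it at speed at most `1` in any given
time `L > 1`: at each nondegenerate fiber it pauses for a positive time, the sum of these times
being `L - 1` or less, and meanwhile fills the fiber with the retraction of a curve that fills the
whole band. By the Hahn–Mazurkiewicz theorem, the rest of `X` can be filled in an arbitrarily short
time by curves based at the two end points of the arc. So there is a curve `Γ` onto `X`, with
parameter interval of length `5 / 4`, along which the function `G` given by the distance to the end
points of the arc, and by `0` off the arc, is `1`-Lipschitz. Since `G` takes values in `[0, 1 / 2]`,
the images of the three maps `x ↦ Γ (5 / 6 * (i / 2 + G x))`, `i = 0, 1, 2`, cover `X`, while `G`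
contracts by the factor `5 / 6` under each of them.
-/

open Set Filter Topology

/-! ### Chains of small steps -/

section StepChain

variable {Y : Type*}

/-- The sequence that follows `u` up to time `m` and then restarts with `v`. -/
def appendSeq (m : ℕ) (u v : ℕ → Y) (i : ℕ) : Y :=
  if i < m then u i else v (i - m)

theorem appendSeq_add (m : ℕ) (u v : ℕ → Y) (i : ℕ) : appendSeq m u v (m + i) = v i := by
  simp [appendSeq]

theorem appendSeq_of_le {m : ℕ} {u v : ℕ → Y} (h : u m = v 0) {i : ℕ} (hi : i ≤ m) :
    appendSeq m u v i = u i := by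
  rcases hi.lt_or_eq with hi | rfl
  · exact if_pos hi
  · exact (appendSeq_add i u v 0).trans h.symm

theorem range_subset_range_appendSeq_right (m : ℕ) (u v : ℕ → Y) :
    range v ⊆ range (appendSeq m u v) := by
  rintro _ ⟨i, rfl⟩
  exact ⟨m + i, appendSeq_add m u v i⟩

/-- The first `N` of the sequences `v i`, each followed for `M` steps, one after the other, and then
the constant `b`. -/
def concatSeq (N M : ℕ) (v : ℕ → ℕ → Y) (b : Y) (k : ℕ) : Y :=
  if k < N * M then v (k / M) (k % M) else b

theorem concatSeq_of_le {N M : ℕ} (v : ℕ → ℕ → Y) (b : Y) {k : ℕ} (hk : N * M ≤ k) :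
    concatSeq N M v b k = b :=
  if_neg hk.not_gt

theorem concatSeq_mul_add {N M : ℕ} (hM : 0 < M) {v : ℕ → ℕ → Y} {u : ℕ → Y} {b : Y}
    (hv₀ : ∀ i, v i 0 = u i) (hvM : ∀ i < N, v i M = u (i + 1)) (hb : u N = b) {i j : ℕ}
    (hi : i < N) (hj : j ≤ M) : concatSeq N M v b (i * M + j) = v i j := by
  have hend : (i + 1) * M ≤ N * M := Nat.mul_le_mul_right M hi
  rw [Nat.succ_mul] at hend
  rcases hj.lt_or_eq with hj | rfl
  · rw [concatSeq, if_pos (by omega), Nat.mul_comm, Nat.mul_add_div hM, Nat.div_eq_of_lt hj,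
      Nat.mul_add_mod, Nat.mod_eq_of_lt hj, add_zero]
  · rcases (Nat.succ_le_of_lt hi).lt_or_eq with hi' | rfl
    · have hlt := Nat.mul_lt_mul_of_pos_right hi' hM
      rw [Nat.succ_eq_add_one, Nat.succ_mul] at hlt
      rw [concatSeq, if_pos hlt, ← Nat.succ_mul, Nat.mul_div_cancel _ hM, Nat.mul_mod_left, hv₀,
        hvM i hi]
    · rw [concatSeq_of_le v b (Nat.succ_mul i j).le, hvM i hi, ← hb]

variable [PseudoMetricSpace Y]

/-- A chain in `D` from `a` to `b` with steps shorter than `η`, encoded as an infinite sequence that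
has reached `b` for good at time `m`. -/
structure IsStepChain (η : ℝ) (D : Set Y) (a b : Y) (m : ℕ) (u : ℕ → Y) : Prop where
  start : u 0 = a
  end_eq : ∀ i, m ≤ i → u i = b
  mem : ∀ i, u i ∈ D
  dist_lt : ∀ i, dist (u i) (u (i + 1)) < η

namespace IsStepChain

variable {η : ℝ} {D : Set Y} {a b c : Y} {m m' : ℕ} {u v : ℕ → Y}

theorem mono (h : IsStepChain η D a b m u) (hm : m ≤ m') : IsStepChain η D a b m' u :=
  { h with end_eq := fun i hi => h.end_eq i (hm.trans hi) }

theorem append (hu : IsStepChain η D a b m u) (hv : IsStepChain η D b c m' v) :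
    IsStepChain η D a c (m + m') (appendSeq m u v) := by
  have hjoin : u m = v 0 := (hu.end_eq m le_rfl).trans hv.start.symm
  refine ⟨(appendSeq_of_le hjoin m.zero_le).trans hu.start, fun i hi => ?_, fun i => ?_,
    fun i => ?_⟩
  · obtain ⟨j, rfl⟩ := Nat.exists_eq_add_of_le ((Nat.le_add_right m m').trans hi)
    rw [appendSeq_add, hv.end_eq j (by omega)]
  · unfold appendSeq
    split_ifs
    exacts [hu.mem _, hv.mem _]
  · rcases lt_or_ge i m with hi | hi
    · rw [appendSeq_of_le hjoin hi.le, appendSeq_of_le hjoin hi]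
      exact hu.dist_lt i
    · obtain ⟨j, rfl⟩ := Nat.exists_eq_add_of_le hi
      rw [add_assoc, appendSeq_add, appendSeq_add]
      exact hv.dist_lt j

theorem range_subset_range_appendSeq_left (hu : IsStepChain η D a b m u)
    (hv : IsStepChain η D b c m' v) : range u ⊆ range (appendSeq m u v) := by
  rintro _ ⟨i, rfl⟩
  have hjoin : u m = v 0 := (hu.end_eq m le_rfl).trans hv.start.symm
  refine ⟨min i m, (appendSeq_of_le hjoin (min_le_right i m)).trans ?_⟩
  rcases le_total i m with hi | hi
  · rw [min_eq_left hi]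
  · rw [min_eq_right hi, hu.end_eq m le_rfl, hu.end_eq i hi]

theorem of_dist_lt (ha : a ∈ D) (hb : b ∈ D) (hab : dist a b < η) :
    IsStepChain η D a b 1 (fun i => if i = 0 then a else b) where
  start := if_pos rfl
  end_eq i hi := if_neg (by omega)
  mem i := by
    split_ifs
    exacts [ha, hb]
  dist_lt i := by
    rcases i with _ | i
    · simpa using hab
    · simpa using dist_nonneg.trans_lt hab

end IsStepChain

variable {η : ℝ} {D : Set Y} {a b : Y}

theorem exists_isStepChain (hD : IsPreconnected D) (hη : 0 < η) (ha : a ∈ D) (hb : b ∈ D) :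
    ∃ m u, IsStepChain η D a b m u := by
  refine hD.induction₂' (fun x y => ∃ m u, IsStepChain η D x y m u) (fun x hx => ?_) ?_ ha hb
  · filter_upwards [self_mem_nhdsWithin, mem_nhdsWithin_of_mem_nhds (Metric.ball_mem_nhds x hη)]
      with y hy hyx
    exact ⟨⟨1, _, .of_dist_lt hx hy (by rwa [dist_comm])⟩, ⟨1, _, .of_dist_lt hy hx hyx⟩⟩
  · rintro x y z - - - ⟨m, u, hu⟩ ⟨m', v, hv⟩
    exact ⟨_, _, hu.append hv⟩

theorem exists_isStepChain_visiting (hD : IsPreconnected D) (hη : 0 < η) (ha : a ∈ D) (hb : b ∈ D)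
    {N : Set Y} (hN : N.Finite) (hND : N ⊆ D) :
    ∃ m u, IsStepChain η D a b m u ∧ N ⊆ range u := by
  induction N, hN using Set.Finite.induction_on generalizing a with
  | empty =>
    obtain ⟨m, u, hu⟩ := exists_isStepChain hD hη ha hb
    exact ⟨m, u, hu, empty_subset _⟩
  | @insert c N _ _ ih =>
    have hc : c ∈ D := hND (mem_insert c N)
    obtain ⟨m, u, hu⟩ := exists_isStepChain hD hη ha hc
    obtain ⟨m', v, hv, hNv⟩ := ih hc ((subset_insert c N).trans hND)
    refine ⟨_, _, hu.append hv, insert_subset ?_ ?_⟩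
    · exact hu.range_subset_range_appendSeq_left hv ⟨m, hu.end_eq m le_rfl⟩
    · exact hNv.trans (range_subset_range_appendSeq_right m u v)

theorem exists_dense_isStepChain (hD : IsPreconnected D) (hD' : TotallyBounded D) (hη : 0 < η)
    (ha : a ∈ D) (hb : b ∈ D) :
    ∃ m u, IsStepChain η D a b m u ∧ ∀ z ∈ D, ∃ i < m, dist z (u i) < η := by
  obtain ⟨N, hND, hN, hcover⟩ := totallyBounded_iff_subset.1 hD' {p | dist p.1 p.2 < η}
    (Metric.dist_mem_uniformity hη)
  obtain ⟨m, u, hu, hNu⟩ := exists_isStepChain_visiting hD hη ha hb hN hND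
  refine ⟨m + 1, u, hu.mono m.le_succ, fun z hz => ?_⟩
  obtain ⟨y, hyN, hzy⟩ : ∃ y ∈ N, dist z y < η := by simpa using hcover hz
  obtain ⟨i, rfl⟩ := hNu hyN
  rcases le_total i m with hi | hi
  · exact ⟨i, by omega, hzy⟩
  · exact ⟨m, by omega, by rwa [hu.end_eq m le_rfl, ← hu.end_eq i hi]⟩

theorem IsStepChain.concat {N M : ℕ} (hM : 0 < M) (hη : 0 < η) {D : ℕ → Set Y} {u : ℕ → Y}
    {m : ℕ → ℕ} {v : ℕ → ℕ → Y} (hb : u N = b) (hm : ∀ i < N, m i ≤ M)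
    (hv : ∀ i, IsStepChain η (D i) (u i) (u (i + 1)) (m i) (v i)) :
    IsStepChain η univ (u 0) b (N * M) (concatSeq N M v b) := by
  have hblock {i j : ℕ} (hi : i < N) (hj : j ≤ M) : concatSeq N M v b (i * M + j) = v i j :=
    concatSeq_mul_add hM (fun i => (hv i).start) (fun i hi => (hv i).end_eq M (hm i hi)) hb hi hj
  refine ⟨?_, fun k hk => concatSeq_of_le v b hk, fun k => mem_univ _, fun k => ?_⟩
  · rcases N.eq_zero_or_pos with rfl | hN
    · rw [concatSeq_of_le v b (by simp), hb]
    · simpa [(hv 0).start] using hblock hN M.zero_le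
  · rcases lt_or_ge k (N * M) with hk | hk
    · have hi : k / M < N := Nat.div_lt_of_lt_mul (by rwa [mul_comm])
      have hj : k % M < M := Nat.mod_lt k hM
      rw [← Nat.div_add_mod' k M, add_assoc, hblock hi hj.le, hblock hi hj]
      exact (hv _).dist_lt _
    · rw [concatSeq_of_le v b hk, concatSeq_of_le v b (by omega), dist_self]
      exact hη

end StepChain

/-! ### The Hahn–Mazurkiewicz theorem -/

section HahnMazurkiewicz

theorem exists_forall_dist_lt_mem_connectedComponentIn {Y : Type*} [PseudoMetricSpace Y]
    [CompactSpace Y] [LocallyConnectedSpace Y] {ε : ℝ} (hε : 0 < ε) :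
    ∃ δ > 0, ∀ x y : Y, dist x y < δ → y ∈ connectedComponentIn (Metric.ball x ε) x := by
  obtain ⟨δ, hδ, h⟩ := lebesgue_number_lemma_of_metric (isCompact_univ (X := Y))
    (c := fun z => connectedComponentIn (Metric.ball z (ε / 2)) z)
    (fun z => Metric.isOpen_ball.connectedComponentIn)
    (fun z _ => mem_iUnion.2 ⟨z, mem_connectedComponentIn (Metric.mem_ball_self (half_pos hε))⟩)
  refine ⟨δ, hδ, fun x y hxy => ?_⟩
  obtain ⟨z, hz⟩ := h x (mem_univ x)
  have hx := hz (Metric.mem_ball_self hδ)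
  have hy := hz (Metric.mem_ball'.2 hxy)
  have hxz : x ∈ Metric.ball z (ε / 2) := connectedComponentIn_subset _ _ hx
  rw [Metric.mem_ball'] at hxz
  exact isPreconnected_connectedComponentIn.subset_connectedComponentIn hx
    ((connectedComponentIn_subset _ _).trans (Metric.ball_subset_ball' (by linarith))) hy

/-- A `δ`-chain of length `N` from `a` to `b` that is `δ`-dense in the space. -/
structure IsDenseChain {Y : Type*} [PseudoMetricSpace Y] (δ : ℝ) (a b : Y) (N : ℕ)
    (u : ℕ → Y) : Prop extends IsStepChain δ univ a b N u where
  dense : ∀ z, ∃ i < N, dist z (u i) < δ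

theorem IsDenseChain.length_pos {Y : Type*} [PseudoMetricSpace Y] {δ : ℝ} {a b : Y} {N : ℕ}
    {u : ℕ → Y} (hu : IsDenseChain δ a b N u) : 0 < N :=
  let ⟨i, hi, _⟩ := hu.dense a
  i.zero_le.trans_lt hi

theorem IsDenseChain.mono_step {Y : Type*} [PseudoMetricSpace Y] {δ δ' : ℝ} {a b : Y} {N : ℕ}
    {u : ℕ → Y} (hu : IsDenseChain δ a b N u) (hδ : δ ≤ δ') : IsDenseChain δ' a b N u where
  toIsStepChain := { hu.toIsStepChain with dist_lt := fun i => (hu.dist_lt i).trans_le hδ }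
  dense z := (hu.dense z).imp fun _ h => ⟨h.1, h.2.trans_le hδ⟩

theorem IsDenseChain.exists_refinement {Y : Type*} [PseudoMetricSpace Y] [CompactSpace Y]
    {ε δ η : ℝ} (hη : 0 < η)
    (hδ : ∀ x y : Y, dist x y < δ → y ∈ connectedComponentIn (Metric.ball x ε) x)
    {a b : Y} {N : ℕ} {u : ℕ → Y} (hu : IsDenseChain δ a b N u) :
    ∃ M v, 0 < M ∧ IsDenseChain η a b (N * M) v ∧ ∀ k, dist (v k) (u (k / M)) < ε := by
  have hδ₀ : 0 < δ := dist_nonneg.trans_lt (hu.dist_lt 0)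
  have hself (x : Y) :
      x ∈ connectedComponentIn (Metric.ball x ε) x := hδ x x (by simpa using hδ₀)
  have hball (x : Y) : connectedComponentIn (Metric.ball x ε) x ⊆ Metric.ball x ε :=
    connectedComponentIn_subset _ _
  choose m v hv hdense using fun i => exists_dense_isStepChain
    (isPreconnected_connectedComponentIn (F := Metric.ball (u i) ε) (x := u i))
    (isCompact_univ.totallyBounded.subset (subset_univ _)) hη (hself _) (hδ _ _ (hu.dist_lt i))
  set M := (Finset.range N).sup m + 1
  have hmM (i : ℕ) (hi : i < N) : m i ≤ M :=
    (Finset.le_sup (Finset.mem_range.2 hi)).trans (Nat.le_succ _)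
  have hM : 0 < M := Nat.succ_pos _
  have huN : u N = b := hu.end_eq N le_rfl
  refine ⟨M, concatSeq N M v b, hM, ⟨?_, fun z => ?_⟩, fun k => ?_⟩
  · simpa only [hu.start] using IsStepChain.concat hM hη huN hmM hv
  · obtain ⟨i, hi, hz⟩ := hu.dense z
    obtain ⟨j, hj, hzj⟩ := hdense i z (hδ _ _ (by rwa [dist_comm]))
    have hjM : j < M := hj.trans_le (hmM i hi)
    refine ⟨i * M + j, ?_, ?_⟩
    · calc i * M + j < (i + 1) * M := by rw [Nat.succ_mul]; omega
        _ ≤ N * M := Nat.mul_le_mul_right M hi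
    · rwa [concatSeq_mul_add hM (fun i => (hv i).start)
        (fun i hi => (hv i).end_eq M (hmM i hi)) huN hi hjM.le]
  · rcases lt_or_ge k (N * M) with hk | hk
    · rw [concatSeq, if_pos hk]
      exact hball _ ((hv _).mem _)
    · rw [concatSeq_of_le v b hk, hu.end_eq _ ((Nat.le_div_iff_mul_le hM).2 hk)]
      exact hball b (hself b)

theorem exists_seq_refining_denseChains {Y : Type*} [PseudoMetricSpace Y] [CompactSpace Y]
    [ConnectedSpace Y] [LocallyConnectedSpace Y] (a b : Y) :
    ∃ (N : ℕ → ℕ) (u : ℕ → ℕ → Y), ∀ n, IsDenseChain ((1 / 2) ^ n) a b (N n) (u n) ∧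
      ∃ M, 0 < M ∧ N (n + 1) = N n * M ∧
        ∀ k, dist (u n (k / M)) (u (n + 1) k) ≤ (1 / 2) ^ n := by
  choose δ hδ hcomp using fun n : ℕ => exists_forall_dist_lt_mem_connectedComponentIn (Y := Y)
    (show (0 : ℝ) < (1 / 2) ^ n by positivity)
  let η (n : ℕ) : ℝ := min (δ n) ((1 / 2) ^ n)
  have hη (n : ℕ) : 0 < η n := lt_min (hδ n) (by positivity)
  let Chain (n : ℕ) := {c : ℕ × (ℕ → Y) // IsDenseChain (η n) a b c.1 c.2}
  have hnext (n : ℕ) (c : Chain n) : ∃ c' : Chain (n + 1), ∃ M, 0 < M ∧ c'.1.1 = c.1.1 * M ∧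
      ∀ k, dist (c.1.2 (k / M)) (c'.1.2 k) ≤ (1 / 2) ^ n := by
    obtain ⟨M, v, hM, hv, hdist⟩ := c.2.exists_refinement (ε := (1 / 2) ^ n) (hη (n + 1))
      fun x y hxy => hcomp n x y (hxy.trans_le (min_le_left _ _))
    exact ⟨⟨(_, v), hv⟩, M, hM, rfl, fun k => by simpa only [dist_comm] using (hdist k).le⟩
  choose next hnext using hnext
  obtain ⟨m, u, hu, hdense⟩ := exists_dense_isStepChain (isPreconnected_univ (α := Y))
    isCompact_univ.totallyBounded (hη 0) (mem_univ a) (mem_univ b)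
  let c (n : ℕ) : Chain n := Nat.rec ⟨(m, u), hu, fun z => hdense z (mem_univ z)⟩ next n
  exact ⟨fun n => (c n).1.1, fun n => (c n).1.2,
    fun n => ⟨(c n).2.mono_step (min_le_right _ _), hnext n (c n)⟩⟩
theorem floor_le_floor_add_one_of_le_add_one {x y : ℝ} (h : y ≤ x + 1) : ⌊y⌋₊ ≤ ⌊x⌋₊ + 1 := by
  rcases le_total 0 x with hx | hx
  · exact (Nat.floor_mono h).trans (Nat.floor_add_one hx).le
  · exact (Nat.floor_le_one_of_le_one (by linarith)).trans (Nat.le_add_left 1 _)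

theorem dist_floor_mul_le {Y : Type*} [PseudoMetricSpace Y] {u : ℕ → Y} {η : ℝ}
    (hu : ∀ i, dist (u i) (u (i + 1)) ≤ η) {N : ℕ} (hN : 0 < N) {s t : ℝ}
    (hst : |s - t| ≤ 1 / N) : dist (u ⌊s * N⌋₊) (u ⌊t * N⌋₊) ≤ η := by
  wlog hle : s ≤ t generalizing s t
  · rw [dist_comm]
    exact this (by rwa [abs_sub_comm]) (le_of_not_ge hle)
  have hN' : (0 : ℝ) < N := Nat.cast_pos.2 hN
  have hmul : t * N ≤ s * N + 1 := by
    have : (t - s) * N ≤ 1 := (le_div_iff₀ hN').1 ((le_abs_self _).trans (by rwa [abs_sub_comm]))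
    linarith
  have hle' : ⌊s * N⌋₊ ≤ ⌊t * N⌋₊ := Nat.floor_mono (by gcongr)
  rcases (floor_le_floor_add_one_of_le_add_one hmul).lt_or_eq with h | h
  · rw [show ⌊t * (N : ℝ)⌋₊ = ⌊s * (N : ℝ)⌋₊ by omega, dist_self]
    exact dist_nonneg.trans (hu 0)
  · rw [h]
    exact hu _

theorem exists_tendstoUniformly_of_dist_le_geometric {T Y : Type*} [PseudoMetricSpace Y]
    [CompleteSpace Y] {F : ℕ → T → Y} (hF : ∀ n t, dist (F n t) (F (n + 1) t) ≤ (1 / 2) ^ n) :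
    ∃ f, TendstoUniformly F f atTop := by
  have hF' (t : T) (n : ℕ) : dist (F n t) (F (n + 1) t) ≤ 2 / 2 / 2 ^ n := by
    simpa using hF n t
  choose f hf using fun t => cauchySeq_tendsto_of_complete (cauchySeq_of_le_geometric_two (hF' t))
  refine ⟨f, Metric.tendstoUniformly_iff.2 fun ε hε => ?_⟩
  have hlim : Tendsto (fun n : ℕ => 2 * (1 / 2 : ℝ) ^ n) atTop (𝓝 0) := by
    simpa using (tendsto_pow_atTop_nhds_zero_of_lt_one (r := (1 / 2 : ℝ)) (by norm_num)
      (by norm_num)).const_mul 2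
  filter_upwards [hlim.eventually_lt_const hε] with n hn t
  rw [dist_comm]
  refine (dist_le_of_le_geometric_two_of_tendsto (hF' t) (hf t) n).trans_lt ?_
  simpa [div_eq_mul_inv] using hn

theorem continuous_of_tendstoUniformly_of_small_oscillation {ι T Y : Type*} [TopologicalSpace T]
    [PseudoMetricSpace Y] {p : Filter ι} [p.NeBot] {F : ι → T → Y} {f : T → Y}
    (hF : TendstoUniformly F f p)
    (hosc : ∀ ε > 0, ∀ᶠ n in p, ∀ t, ∀ᶠ s in 𝓝 t, dist (F n s) (F n t) ≤ ε) : Continuous f := by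
  refine continuous_iff_continuousAt.2 fun t => Metric.tendsto_nhds.2 fun ε hε => ?_
  have hε' : 0 < ε / 3 := by positivity
  obtain ⟨n, hdist, hn⟩ := ((Metric.tendstoUniformly_iff.1 hF _ hε').and (hosc _ hε')).exists
  filter_upwards [hn t] with s hs
  have ht := hdist t
  rw [dist_comm] at ht
  linarith [dist_triangle4 (f s) (F n s) (F n t) (f t), hdist s]

theorem surjOn_univ_of_tendstoUniformly {ι T Y : Type*} [TopologicalSpace T] [MetricSpace Y]
    {p : Filter ι} [p.NeBot] {F : ι → T → Y} {f : T → Y} (hF : TendstoUniformly F f p)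
    (hf : Continuous f) {K : Set T} (hK : IsCompact K)
    (hdense : ∀ ε > 0, ∀ᶠ n in p, ∀ z, ∃ t ∈ K, dist z (F n t) < ε) : SurjOn f K univ := by
  intro z _
  rw [← (hK.image hf).isClosed.closure_eq]
  refine Metric.mem_closure_iff.2 fun ε hε => ?_
  obtain ⟨n, hdist, hn⟩ :=
    ((Metric.tendstoUniformly_iff.1 hF _ (half_pos hε)).and (hdense _ (half_pos hε))).exists
  obtain ⟨t, htK, hzt⟩ := hn z
  refine ⟨f t, mem_image_of_mem f htK, ?_⟩
  have ht := hdist t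
  rw [dist_comm] at ht
  linarith [dist_triangle z (F n t) (f t)]

/-- A curve from `a` to `b` with parameter interval `[0, L]`, extended to `ℝ` by constants. -/
structure IsCurve {Y : Type*} [TopologicalSpace Y] (γ : ℝ → Y) (L : ℝ) (a b : Y) : Prop where
  continuous : Continuous γ
  eq_left : ∀ t ≤ 0, γ t = a
  eq_right : ∀ t, L ≤ t → γ t = b

/-- **Hahn–Mazurkiewicz**, with prescribed endpoints. -/
theorem exists_isCurve_surjOn {Y : Type*} [MetricSpace Y] [CompactSpace Y] [ConnectedSpace Y]
    [LocallyConnectedSpace Y] (a b : Y) :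
    ∃ γ : ℝ → Y, IsCurve γ 1 a b ∧ SurjOn γ (Icc 0 1) univ := by
  obtain ⟨N, u, hNu⟩ := exists_seq_refining_denseChains a b
  have hu (n : ℕ) := (hNu n).1
  have hN (n : ℕ) : (0 : ℝ) < N n := Nat.cast_pos.2 (hu n).length_pos
  let F (n : ℕ) (t : ℝ) : Y := u n ⌊t * N n⌋₊
  have hFF (n : ℕ) (t : ℝ) : dist (F n t) (F (n + 1) t) ≤ (1 / 2) ^ n := by
    obtain ⟨M, hM, hNM, hdist⟩ := (hNu n).2
    have hM' : (M : ℝ) ≠ 0 := by positivity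
    have hfloor : ⌊t * N (n + 1)⌋₊ / M = ⌊t * N n⌋₊ := by
      rw [← Nat.floor_div_natCast, hNM, Nat.cast_mul, ← mul_assoc, mul_div_cancel_right₀ _ hM']
    simpa only [F, hfloor] using hdist ⌊t * N (n + 1)⌋₊
  obtain ⟨γ, hγ⟩ := exists_tendstoUniformly_of_dist_le_geometric hFF
  have hsmall (ε : ℝ) (hε : 0 < ε) : ∀ᶠ n : ℕ in atTop, (1 / 2 : ℝ) ^ n < ε :=
    (tendsto_pow_atTop_nhds_zero_of_lt_one (by norm_num) (by norm_num)).eventually_lt_const hε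
  have hcont : Continuous γ := by
    refine continuous_of_tendstoUniformly_of_small_oscillation hγ fun ε hε => ?_
    filter_upwards [hsmall ε hε] with n hn t
    filter_upwards [Metric.closedBall_mem_nhds t (one_div_pos.2 (hN n))] with s hs
    exact (dist_floor_mul_le (fun i => ((hu n).dist_lt i).le) (hu n).length_pos hs).trans hn.le
  refine ⟨γ, ⟨hcont, fun t ht => ?_, fun t ht => ?_⟩,
    surjOn_univ_of_tendstoUniformly hγ hcont isCompact_Icc fun ε hε => ?_⟩
  · refine tendsto_nhds_unique (hγ.tendsto_at t) (tendsto_const_nhds.congr fun n => ?_)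
    have hneg : t * N n ≤ 0 := mul_nonpos_of_nonpos_of_nonneg ht (hN n).le
    simp only [F, Nat.floor_of_nonpos hneg, (hu n).start]
  · refine tendsto_nhds_unique (hγ.tendsto_at t) (tendsto_const_nhds.congr fun n => ?_)
    exact ((hu n).end_eq _ (Nat.le_floor (le_mul_of_one_le_left (hN n).le ht))).symm
  · filter_upwards [hsmall ε hε] with n hn z
    obtain ⟨i, hi, hz⟩ := (hu n).dense z
    have hi' : (i : ℝ) ≤ N n := Nat.cast_le.2 hi.le
    refine ⟨i / N n, ⟨by positivity, (div_le_one (hN n)).2 hi'⟩, ?_⟩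
    simp only [F, div_mul_cancel₀ _ (hN n).ne', Nat.floor_natCast]
    exact hz.trans hn

end HahnMazurkiewicz
/-- The curve `γ` on `[0, L]` followed by the curve `γ'`. -/
noncomputable def curveTrans {Y : Type*} (γ : ℝ → Y) (L : ℝ) (γ' : ℝ → Y) (s : ℝ) : Y :=
  if s ≤ L then γ s else γ' (s - L)

namespace IsCurve

variable {Y : Type*} [TopologicalSpace Y] {γ γ' : ℝ → Y} {L L' : ℝ} {a b c : Y}

theorem comp_continuous {Z : Type*} [TopologicalSpace Z] (hγ : IsCurve γ L a b) {f : Y → Z}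
    (hf : Continuous f) : IsCurve (f ∘ γ) L (f a) (f b) where
  continuous := hf.comp hγ.continuous
  eq_left _ ht := congrArg f (hγ.eq_left _ ht)
  eq_right _ ht := congrArg f (hγ.eq_right _ ht)

theorem rescale (hγ : IsCurve γ 1 a b) (hL : 0 < L) : IsCurve (fun s => γ (s / L)) L a b where
  continuous := hγ.continuous.comp (continuous_id.div_const L)
  eq_left _ ht := hγ.eq_left _ (div_nonpos_of_nonpos_of_nonneg ht hL.le)
  eq_right _ ht := hγ.eq_right _ ((one_le_div hL).2 ht)

theorem curveTrans_of_ge (hγ : IsCurve γ L a b) (hγ' : IsCurve γ' L' b c) {s : ℝ} (hs : L ≤ s) :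
    curveTrans γ L γ' s = γ' (s - L) := by
  rcases hs.eq_or_lt with rfl | hs
  · rw [curveTrans, if_pos le_rfl, hγ.eq_right _ le_rfl, hγ'.eq_left _ (sub_self _).le]
  · exact if_neg hs.not_ge

theorem trans (hγ : IsCurve γ L a b) (hγ' : IsCurve γ' L' b c) (hL : 0 ≤ L) (hL' : 0 ≤ L') :
    IsCurve (curveTrans γ L γ') (L + L') a c where
  continuous := by
    refine Continuous.if_le hγ.continuous (hγ'.continuous.comp (continuous_id.sub continuous_const))
      continuous_id continuous_const ?_
    rintro s rfl
    exact (hγ.eq_right _ le_rfl).trans (hγ'.eq_left _ (sub_self _).le).symm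
  eq_left t ht := (if_pos (ht.trans hL)).trans (hγ.eq_left t ht)
  eq_right t ht := by
    rw [hγ.curveTrans_of_ge hγ' (by linarith), hγ'.eq_right _ (by linarith)]

theorem union_image_subset_image_trans (hγ : IsCurve γ L a b) (hγ' : IsCurve γ' L' b c)
    (hL : 0 ≤ L) (hL' : 0 ≤ L') :
    γ '' Icc 0 L ∪ γ' '' Icc 0 L' ⊆ curveTrans γ L γ' '' Icc 0 (L + L') := by
  rintro _ (⟨s, hs, rfl⟩ | ⟨s, hs, rfl⟩)
  · exact ⟨s, ⟨hs.1, by linarith [hs.2]⟩, if_pos hs.2⟩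
  · refine ⟨L + s, ⟨add_nonneg hL hs.1, by linarith [hs.2]⟩, ?_⟩
    rw [hγ.curveTrans_of_ge hγ' (by linarith [hs.1]), add_sub_cancel_left]

end IsCurve

/-! ### Closed sets with finite frontier -/

section FiniteFrontier

variable {X : Type*} [TopologicalSpace X] {C S : Set X} {x : X}

theorem isPreconnected_inter_of_frontier_subset_singleton (hC : IsPreconnected C)
    (hS : IsClosed S) (hxC : x ∈ C) (hxS : x ∈ S) (hfr : C ∩ frontier S ⊆ {x}) :
    IsPreconnected (C ∩ S) := by
  suffices key : ∀ u v : Set X, IsOpen u → IsOpen v → C ∩ S ⊆ u ∪ v → C ∩ S ∩ (u ∩ v) = ∅ →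
      x ∈ u → C ∩ S ⊆ u by
    refine isPreconnected_iff_subset_of_disjoint.2 fun u v hu hv huv hdisj => ?_
    rcases huv ⟨hxC, hxS⟩ with h | h
    · exact Or.inl (key u v hu hv huv hdisj h)
    · exact Or.inr (key v u hv hu (by rwa [union_comm]) (by rwa [inter_comm v u]) h)
  intro u v hu hv huv hdisj hxu
  have hxv : x ∉ v := fun hxv => hdisj.subset ⟨⟨hxC, hxS⟩, hxu, hxv⟩
  have hcover : C ⊆ (u ∪ Sᶜ) ∪ (v ∩ interior S) := by
    intro c hc
    by_cases hcS : c ∈ S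
    · rcases huv ⟨hc, hcS⟩ with h | h
      · exact Or.inl (Or.inl h)
      · refine Or.inr ⟨h, not_not.1 fun hcint => hxv ?_⟩
        rwa [← mem_singleton_iff.1 (hfr ⟨hc, subset_closure hcS, hcint⟩)]
    · exact Or.inl (Or.inr hcS)
  have hempty : C ∩ ((u ∪ Sᶜ) ∩ (v ∩ interior S)) = ∅ := by
    refine eq_empty_of_forall_notMem ?_
    rintro c ⟨hc, h | h, hcv, hcS⟩
    · exact hdisj.subset ⟨⟨hc, interior_subset hcS⟩, h, hcv⟩
    · exact h (interior_subset hcS)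
  rcases isPreconnected_iff_subset_of_disjoint.1 hC _ _ (hu.union hS.isOpen_compl)
    (hv.inter isOpen_interior) hcover hempty with h | h
  · exact fun c hc => (h hc.1).resolve_right fun h' => h' hc.2
  · exact absurd (h hxC).1 hxv

theorem isClosed_connectedComponentIn (hS : IsClosed S) (x : X) :
    IsClosed (connectedComponentIn S x) := by
  by_cases hx : x ∈ S
  · rw [connectedComponentIn_eq_image hx]
    exact hS.isClosedEmbedding_subtypeVal.isClosedMap _ isClosed_connectedComponent
  · rw [connectedComponentIn_eq_empty hx]
    exact isClosed_empty

variable [LocallyConnectedSpace X]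

theorem locallyConnectedSpace_of_finite_frontier [T1Space X] (hS : IsClosed S)
    (hfin : (frontier S).Finite) : LocallyConnectedSpace S := by
  rw [locallyConnectedSpace_iff_connected_subsets]
  intro x U hU
  obtain ⟨W, hW, hWU⟩ := (mem_nhds_subtype _ _ _).1 hU
  have hmem : W ∩ (frontier S \ {(x : X)})ᶜ ∈ 𝓝 (x : X) :=
    inter_mem hW ((hfin.subset sdiff_subset).isClosed.isOpen_compl.mem_nhds (by simp))
  have hsub := connectedComponentIn_subset (W ∩ (frontier S \ {(x : X)})ᶜ) (x : X)
  refine ⟨(↑) ⁻¹' connectedComponentIn (W ∩ (frontier S \ {(x : X)})ᶜ) x,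
    continuous_subtype_val.continuousAt.preimage_mem_nhds (connectedComponentIn_mem_nhds hmem),
    ?_, fun y hy => hWU (hsub hy).1⟩
  rw [← Topology.IsInducing.subtypeVal.isPreconnected_image, Subtype.image_preimage_coe, inter_comm]
  exact isPreconnected_inter_of_frontier_subset_singleton isPreconnected_connectedComponentIn hS
    (mem_connectedComponentIn (mem_of_mem_nhds hmem)) x.2
    fun y hy => not_not.1 fun hyx => (hsub hy.1).2 ⟨hy.2, hyx⟩

theorem frontier_connectedComponentIn_subset (hS : IsClosed S) (x : X) :
    frontier (connectedComponentIn S x) ⊆ frontier S := by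
  intro y hy
  have hyK : y ∈ connectedComponentIn S x := (isClosed_connectedComponentIn hS x).frontier_subset hy
  refine ⟨subset_closure (connectedComponentIn_subset _ _ hyK), fun hyS => hy.2 ?_⟩
  rw [mem_interior_iff_mem_nhds, connectedComponentIn_eq hyK]
  exact connectedComponentIn_mem_nhds (mem_interior_iff_mem_nhds.1 hyS)

theorem exists_mem_frontier_mem_connectedComponentIn [PreconnectedSpace X] (hS : IsClosed S)
    (hS' : S ≠ univ) (hx : x ∈ S) : ∃ y ∈ frontier S, x ∈ connectedComponentIn S y := by
  obtain ⟨y, hy⟩ := nonempty_frontier_iff.2 ⟨⟨x, mem_connectedComponentIn hx⟩,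
    fun h => hS' (univ_subset_iff.1 (h ▸ connectedComponentIn_subset S x))⟩
  refine ⟨y, frontier_connectedComponentIn_subset hS x hy, ?_⟩
  rw [← connectedComponentIn_eq ((isClosed_connectedComponentIn hS x).frontier_subset hy)]
  exact mem_connectedComponentIn hx

end FiniteFrontier

theorem exists_isCurve_covering_connectedComponentIn {X : Type*} [MetricSpace X] [CompactSpace X]
    [LocallyConnectedSpace X] {S : Set X} (hS : IsClosed S) (hfin : (frontier S).Finite) {x : X}
    (hx : x ∈ S) {L : ℝ} (hL : 0 < L) :
    ∃ γ, IsCurve γ L x x ∧ (∀ s, γ s ∈ S) ∧ connectedComponentIn S x ⊆ γ '' Icc 0 L := by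
  have hclosed : IsClosed (connectedComponentIn S x) := isClosed_connectedComponentIn hS x
  have : LocallyConnectedSpace (connectedComponentIn S x) :=
    locallyConnectedSpace_of_finite_frontier hclosed
      (hfin.subset (frontier_connectedComponentIn_subset hS x))
  have : CompactSpace (connectedComponentIn S x) :=
    isCompact_iff_compactSpace.1 hclosed.isCompact
  have : ConnectedSpace (connectedComponentIn S x) :=
    Subtype.connectedSpace (isConnected_connectedComponentIn_iff.2 hx)
  let x' : connectedComponentIn S x := ⟨x, mem_connectedComponentIn hx⟩
  obtain ⟨γ, hγ, hsurj⟩ := exists_isCurve_surjOn x' x'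
  refine ⟨_, (hγ.comp_continuous continuous_subtype_val).rescale hL,
    fun s => connectedComponentIn_subset S x (γ (s / L)).2, fun z hz => ?_⟩
  obtain ⟨t, ht, htz⟩ := hsurj (mem_univ ⟨z, hz⟩)
  refine ⟨t * L, ⟨mul_nonneg ht.1 hL.le, mul_le_of_le_one_left hL.le ht.2⟩, ?_⟩
  simp [mul_div_cancel_right₀ _ hL.ne', htz]

/-! ### Families of contractions measured by a function -/

section WitnessingFamily

theorem topContractive_of_contracts_dist {X M : Type*} [MetricSpace X] [PseudoMetricSpace M]
    {F : Set (X → X)} {G : X → M} {q : ℝ} (hq₀ : 0 ≤ q) (hq₁ : q < 1)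
    (hG : Bornology.IsBounded (range G))
    (hF : ∀ f ∈ F, ∀ x y, dist (G (f x)) (G (f y)) ≤ q * dist (G x) (G y))
    (hunif : ∀ ε > 0, ∃ η > 0, ∀ f ∈ F, ∀ x y, dist (G x) (G y) < η → dist (f x) (f y) < ε) :
    TopContractive F := by
  obtain ⟨B, hB⟩ := Metric.isBounded_range_iff.1 hG
  have hpow (l : List (X → X)) (hl : ∀ f ∈ l, f ∈ F) (x y : X) :
      dist (G (l.foldr (· ∘ ·) id x)) (G (l.foldr (· ∘ ·) id y)) ≤ q ^ l.length * B := by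
    induction l with
    | nil => simpa using hB x y
    | cons f l ih =>
      rw [List.forall_mem_cons] at hl
      rw [List.length_cons, pow_succ', mul_assoc]
      exact (hF f hl.1 _ _).trans (mul_le_mul_of_nonneg_left (ih hl.2) hq₀)
  intro ε hε
  obtain ⟨η, hη, hηF⟩ := hunif (ε / 2) (half_pos hε)
  have hlim : Tendsto (fun n : ℕ => q ^ n * B) atTop (𝓝 0) := by
    simpa using (tendsto_pow_atTop_nhds_zero_of_lt_one hq₀ hq₁).mul_const B
  obtain ⟨n, hn⟩ := (hlim.eventually_lt_const hη).exists
  refine ⟨n + 1, fun l hl hlen => ?_⟩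
  obtain ⟨f, l, rfl⟩ := List.exists_cons_of_length_eq_add_one hlen
  rw [List.forall_mem_cons] at hl
  rw [List.length_cons, Nat.add_right_cancel_iff] at hlen
  refine (Metric.diam_le_of_forall_dist_le (half_pos hε).le ?_).trans_lt (half_lt_self hε)
  rintro _ ⟨x, rfl⟩ _ ⟨y, rfl⟩
  exact (hηF f hl.1 _ _ ((hpow l hl.2 x y).trans_lt (hlen ▸ hn))).le

theorem topContractive_of_curve {ι X M : Type*} [MetricSpace X] [PseudoMetricSpace M] {G : X → M}
    {q : ℝ} (hq₀ : 0 ≤ q) (hq₁ : q < 1) (hG : Bornology.IsBounded (range G)) {Γ : ℝ → X} {K : Set ℝ}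
    (hK : IsCompact K) (hΓ : ContinuousOn Γ K) (hlip : LipschitzWith 1 (G ∘ Γ)) {time : ι → X → ℝ}
    (hmem : ∀ i x, time i x ∈ K)
    (hdist : ∀ i x y, dist (time i x) (time i y) ≤ q * dist (G x) (G y)) :
    TopContractive (range fun i x => Γ (time i x)) := by
  refine topContractive_of_contracts_dist hq₀ hq₁ hG ?_ fun ε hε => ?_
  · rintro _ ⟨i, rfl⟩ x y
    simpa using (hlip.dist_le_mul (time i x) (time i y)).trans_eq (one_mul _) |>.trans (hdist i x y)
  · obtain ⟨η, hη, hunif⟩ := Metric.uniformContinuousOn_iff.1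
      (hK.uniformContinuousOn_of_continuous hΓ) ε hε
    refine ⟨η, hη, ?_⟩
    rintro _ ⟨i, rfl⟩ x y hxy
    refine hunif _ (hmem i x) _ (hmem i y) ((hdist i x y).trans_lt ?_)
    exact (mul_le_of_le_one_left dist_nonneg hq₁.le).trans_lt hxy

/-- The space `X` is a topological fractal whose witnessing number is at most `n`. -/
def WitnessingNumberLE (X : Type*) [MetricSpace X] (n : ℕ) : Prop :=
  ∃ F : Set (X → X), F.Finite ∧ F.ncard ≤ n ∧ (∀ f ∈ F, Continuous f) ∧
    TopContractive F ∧ (⋃ f ∈ F, range f) = univ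

theorem TopContractive.witnessingNumberLE {X : Type*} [MetricSpace X] {n : ℕ}
    {f : Fin n → X → X} (hf : TopContractive (range f)) (hcont : ∀ i, Continuous (f i))
    (hcover : ∀ x, ∃ i y, f i y = x) : WitnessingNumberLE X n := by
  refine ⟨range f, finite_range f, ?_, forall_mem_range.2 hcont, hf,
    eq_univ_of_forall fun x => ?_⟩
  · simpa [← image_univ, ncard_univ] using ncard_image_le (f := f) finite_univ
  · obtain ⟨i, y, rfl⟩ := hcover x
    exact mem_biUnion (mem_range_self i) (mem_range_self y)

theorem exists_fin_sub_mul_mem_Icc {n : ℕ} (hn : 0 < n) {s ℓ : ℝ} (hℓ : 0 < ℓ)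
    (hs : s ∈ Icc 0 (n * ℓ)) : ∃ i : Fin n, s - i * ℓ ∈ Icc 0 ℓ := by
  rcases hs.2.lt_or_eq with hlt | rfl
  · refine ⟨⟨⌊s / ℓ⌋₊, (Nat.floor_lt (div_nonneg hs.1 hℓ.le)).2 ((div_lt_iff₀ hℓ).2 hlt)⟩, ?_⟩
    have hlower := (le_div_iff₀ hℓ).1 (Nat.floor_le (div_nonneg hs.1 hℓ.le))
    have hupper := (div_lt_iff₀ hℓ).1 (Nat.lt_floor_add_one (s / ℓ))
    constructor <;> dsimp only <;> linarith
  · refine ⟨⟨n - 1, Nat.sub_lt hn one_pos⟩, ?_⟩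
    rw [Nat.cast_pred hn, sub_mul, one_mul, sub_sub_cancel]
    exact right_mem_Icc.2 hℓ.le

/-- The `n` maps run along `n` successive pieces of length `q * ℓ` of the curve `Γ`. -/
theorem witnessingNumberLE_of_curve {X : Type*} [MetricSpace X] {G : X → ℝ} {n : ℕ} {q ℓ : ℝ}
    (hG : Continuous G) (hGrange : range G = Icc 0 ℓ) (hn : 0 < n) (hℓ : 0 < ℓ) (hq₀ : 0 < q)
    (hq₁ : q < 1) {Γ : ℝ → X} (hΓ : Continuous Γ) (hlip : LipschitzWith 1 (G ∘ Γ))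
    (hsurj : SurjOn Γ (Icc 0 (q * (n * ℓ))) univ) : WitnessingNumberLE X n := by
  have hGmem (x : X) : G x ∈ Icc 0 ℓ := hGrange ▸ mem_range_self x
  let time (i : Fin n) (x : X) : ℝ := q * (i * ℓ + G x)
  have htime (i : Fin n) (x : X) : time i x ∈ Icc 0 (q * (n * ℓ)) := by
    have hi : ((i : ℕ) : ℝ) + 1 ≤ n := by exact_mod_cast i.2
    have hle : i * ℓ + G x ≤ n * ℓ := by nlinarith [(hGmem x).2]
    exact ⟨mul_nonneg hq₀.le (add_nonneg (by positivity) (hGmem x).1),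
      mul_le_mul_of_nonneg_left hle hq₀.le⟩
  have hdist (i : Fin n) (x y : X) : dist (time i x) (time i y) = q * dist (G x) (G y) := by
    simp only [time, Real.dist_eq, ← mul_sub, add_sub_add_left_eq_sub, abs_mul, abs_of_pos hq₀]
  have hcontr : TopContractive (range fun i x => Γ (time i x)) :=
    topContractive_of_curve hq₀.le hq₁ (hGrange ▸ Metric.isBounded_Icc 0 ℓ) isCompact_Icc
      hΓ.continuousOn hlip htime fun i x y => (hdist i x y).le
  refine hcontr.witnessingNumberLE (fun i => by fun_prop) fun x => ?_
  obtain ⟨s, hs, rfl⟩ := hsurj (mem_univ x)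
  obtain ⟨i, hi⟩ := exists_fin_sub_mul_mem_Icc hn hℓ (s := s / q)
    ⟨div_nonneg hs.1 hq₀.le, (div_le_iff₀' hq₀).2 hs.2⟩
  obtain ⟨y, hy⟩ : s / q - i * ℓ ∈ range G := hGrange ▸ hi
  refine ⟨i, y, congrArg Γ ?_⟩
  simp only [time, hy, add_sub_cancel, mul_div_cancel₀ _ hq₀.ne']

end WitnessingFamily

/-! ### Functions whose levels are separated by points -/

section SeparatedLevels

variable {Y : Type*} [TopologicalSpace Y] {g : Y → ℝ} {t : ℝ}

/-- For any two levels `s < t` of `g` there is a point lying on every connected set that meets both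
`{g ≤ s}` and `{t ≤ g}`. -/
def HasSeparatedLevels (g : Y → ℝ) : Prop :=
  ∀ s t, s < t → ∃ w, ∀ C : Set Y, IsPreconnected C → (∃ z ∈ C, g z ≤ s) → (∃ z ∈ C, t ≤ g z) →
    w ∈ C

/-- The levels of `g` that consist of more than one point. -/
def nontrivialLevels (g : Y → ℝ) : Set ℝ :=
  {t | ¬(g ⁻¹' {t}).Subsingleton}

theorem HasSeparatedLevels.neg (h : HasSeparatedLevels g) : HasSeparatedLevels (-g) := by
  intro s t hst
  obtain ⟨w, hw⟩ := h (-t) (-s) (neg_lt_neg hst)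
  refine ⟨w, fun C hC ⟨x, hxC, hx⟩ ⟨y, hyC, hy⟩ => hw C hC ⟨y, hyC, ?_⟩ ⟨x, hxC, ?_⟩⟩
  exacts [le_neg_of_le_neg hy, neg_le_of_neg_le hx]

theorem hasSeparatedLevels_of_countable [Nonempty Y] (hg : Continuous g)
    (hcount : (nontrivialLevels g).Countable) : HasSeparatedLevels g := by
  intro s t hst
  obtain ⟨r, hr, hsr, hrt⟩ := (hcount.dense_compl ℝ).exists_between hst
  have hmeet (C : Set Y) (hC : IsPreconnected C) (hs : ∃ z ∈ C, g z ≤ s) (ht : ∃ z ∈ C, t ≤ g z) :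
      ∃ w ∈ C, g w = r := by
    obtain ⟨x, hxC, hx⟩ := hs
    obtain ⟨y, hyC, hy⟩ := ht
    exact hC.intermediate_value hxC hyC hg.continuousOn ⟨hx.trans hsr.le, hrt.le.trans hy⟩
  by_cases hw : ∃ w, g w = r
  · obtain ⟨w, hw⟩ := hw
    refine ⟨w, fun C hC hs ht => ?_⟩
    obtain ⟨z, hzC, hz⟩ := hmeet C hC hs ht
    rwa [not_not.1 hr hw hz]
  · refine ⟨Classical.arbitrary Y, fun C hC hs ht => absurd ?_ hw⟩
    exact (hmeet C hC hs ht).imp fun _ h => h.2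

variable [T2Space Y] [LocallyConnectedSpace Y]

theorem HasSeparatedLevels.subsingleton_fiber_inter_closure_lt (h : HasSeparatedLevels g) :
    (g ⁻¹' {t} ∩ closure (g ⁻¹' Iio t)).Subsingleton := by
  rintro x ⟨hxt, hx⟩ y ⟨hyt, hy⟩
  by_contra hxy
  obtain ⟨U, V, hU, hV, hxU, hyV, hUV⟩ := t2_separation hxy
  obtain ⟨z, hzU, hzt⟩ :=
    mem_closure_iff.1 hx _ hU.connectedComponentIn (mem_connectedComponentIn hxU)
  obtain ⟨z', hzV, hzt'⟩ :=
    mem_closure_iff.1 hy _ hV.connectedComponentIn (mem_connectedComponentIn hyV)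
  obtain ⟨w, hw⟩ := h (max (g z) (g z')) t (max_lt hzt hzt')
  have hwU : w ∈ connectedComponentIn U x := hw _ isPreconnected_connectedComponentIn
    ⟨z, hzU, le_max_left _ _⟩ ⟨x, mem_connectedComponentIn hxU, (Eq.ge hxt :)⟩
  have hwV : w ∈ connectedComponentIn V y := hw _ isPreconnected_connectedComponentIn
    ⟨z', hzV, le_max_right _ _⟩ ⟨y, mem_connectedComponentIn hyV, (Eq.ge hyt :)⟩
  exact disjoint_left.1 hUV (connectedComponentIn_subset _ _ hwU)
    (connectedComponentIn_subset _ _ hwV)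

theorem HasSeparatedLevels.subsingleton_fiber_inter_closure_gt (h : HasSeparatedLevels g) :
    (g ⁻¹' {t} ∩ closure (g ⁻¹' Ioi t)).Subsingleton := by
  simpa [preimage, neg_inj] using h.neg.subsingleton_fiber_inter_closure_lt (t := -t)

variable [PreconnectedSpace Y]

theorem HasSeparatedLevels.subsingleton_fiber (h : HasSeparatedLevels g) (hg : Continuous g)
    (hcover : closure (g ⁻¹' Iio t) ∪ closure (g ⁻¹' Ioi t) = univ) :
    (g ⁻¹' {t}).Subsingleton := by
  rcases (g ⁻¹' Iio t).eq_empty_or_nonempty with hlt | hlt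
  · rw [hlt, closure_empty, empty_union] at hcover
    simpa [hcover] using h.subsingleton_fiber_inter_closure_gt (t := t)
  rcases (g ⁻¹' Ioi t).eq_empty_or_nonempty with hgt | hgt
  · rw [hgt, closure_empty, union_empty] at hcover
    simpa [hcover] using h.subsingleton_fiber_inter_closure_lt (t := t)
  obtain ⟨w, -, hw₁, hw₂⟩ := isPreconnected_closed_iff.1 isPreconnected_univ _ _ isClosed_closure
    isClosed_closure hcover.ge (by simpa using hlt.closure) (by simpa using hgt.closure)
  have hwt : g w = t := le_antisymm (closure_lt_subset_le hg continuous_const hw₁)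
    (closure_lt_subset_le continuous_const hg hw₂)
  have heq (y : Y) (hy : g y = t) : y = w := by
    rcases hcover.ge (mem_univ y) with hy' | hy'
    · exact h.subsingleton_fiber_inter_closure_lt ⟨hy, hy'⟩ ⟨hwt, hw₁⟩
    · exact h.subsingleton_fiber_inter_closure_gt ⟨hy, hy'⟩ ⟨hwt, hw₂⟩
  exact fun y hy z hz => (heq y hy).trans (heq z hz).symm

theorem HasSeparatedLevels.countable_nontrivialLevels [SecondCountableTopology Y]
    (h : HasSeparatedLevels g) (hg : Continuous g) :
    (nontrivialLevels g).Countable := by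
  let O (t : ℝ) : Set Y := (closure (g ⁻¹' Iio t) ∪ closure (g ⁻¹' Ioi t))ᶜ
  have hOg (t : ℝ) (y : Y) (hy : y ∈ O t) : g y = t :=
    le_antisymm (not_lt.1 fun hlt => hy (Or.inr (subset_closure hlt)))
      (not_lt.1 fun hlt => hy (Or.inl (subset_closure hlt)))
  have hdisj : {t | (O t).Nonempty}.PairwiseDisjoint O := fun s _ t _ hst =>
    disjoint_left.2 fun y hs ht => hst ((hOg s y hs).symm.trans (hOg t y ht))
  refine (hdisj.countable_of_isOpen
    (fun t _ => (isClosed_closure.union isClosed_closure).isOpen_compl) fun t ht => ht).mono ?_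
  intro t ht
  by_contra hempty
  exact ht (h.subsingleton_fiber hg (compl_empty_iff.1 (not_nonempty_iff_eq_empty.1 hempty)))

theorem HasSeparatedLevels.exists_continuous_collapse_lt (h : HasSeparatedLevels g)
    (hg : Continuous g) (hlt : ∃ y, g y < t) (hge : ∃ y, t ≤ g y) :
    ∃ a, g a = t ∧ Continuous fun y => if g y < t then a else y := by
  have hle : closure (g ⁻¹' Iio t) ⊆ g ⁻¹' Iic t := closure_lt_subset_le hg continuous_const
  have hopen : IsOpen (g ⁻¹' Iio t) := isOpen_Iio.preimage hg
  have hne : g ⁻¹' Iio t ≠ univ := fun huniv =>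
    let ⟨y, hy⟩ := hge
    hy.not_gt (huniv.ge (mem_univ y))
  have hfr : frontier (g ⁻¹' Iio t) ⊆ g ⁻¹' {t} ∩ closure (g ⁻¹' Iio t) := fun y hy =>
    ⟨le_antisymm (hle hy.1) (not_lt.1 (hopen.frontier_eq ▸ hy).2), hy.1⟩
  obtain ⟨a, ha⟩ := nonempty_frontier_iff.2 ⟨hlt, hne⟩
  exact ⟨a, (hfr ha).1, Continuous.if (fun y hy => h.subsingleton_fiber_inter_closure_lt (hfr ha)
    (hfr hy)) continuous_const continuous_id⟩

theorem HasSeparatedLevels.exists_continuous_collapse_gt (h : HasSeparatedLevels g)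
    (hg : Continuous g) (hgt : ∃ y, t < g y) (hle : ∃ y, g y ≤ t) :
    ∃ a, g a = t ∧ Continuous fun y => if t < g y then a else y := by
  simpa using h.neg.exists_continuous_collapse_lt (t := -t) hg.neg (by simpa) (by simpa)

/-- `r` retracts the space onto the level `{g = t}` and is constant on each side of it. -/
structure IsFiberRetraction (g : Y → ℝ) (t : ℝ) (r : Y → Y) : Prop where
  continuous : Continuous r
  apply_eq : ∀ y, g (r y) = t
  eq_self : ∀ y, g y = t → r y = y
  eq_of_lt : ∀ y y', g y < t → g y' < t → r y = r y'
  eq_of_gt : ∀ y y', t < g y → t < g y' → r y = r y'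

theorem HasSeparatedLevels.exists_isFiberRetraction (h : HasSeparatedLevels g) (hg : Continuous g)
    (hlt : ∃ y, g y < t) (hgt : ∃ y, t < g y) : ∃ r, IsFiberRetraction g t r := by
  obtain ⟨a, hat, ha⟩ := h.exists_continuous_collapse_lt hg hlt (hgt.imp fun _ => le_of_lt)
  obtain ⟨b, hbt, hb⟩ := h.exists_continuous_collapse_gt hg hgt (hlt.imp fun _ => le_of_lt)
  have hr_lt {y : Y} (hy : g y < t) : (if g (if t < g y then b else y) < t then a
      else if t < g y then b else y) = a := by simp [hy, hy.not_gt]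
  have hr_gt {y : Y} (hy : t < g y) : (if g (if t < g y then b else y) < t then a
      else if t < g y then b else y) = b := by simp [hy, hbt]
  refine ⟨_, ha.comp hb, fun y => ?_, fun y hy => by simp [hy],
    fun y y' hy hy' => (hr_lt hy).trans (hr_lt hy').symm,
    fun y y' hy hy' => (hr_gt hy).trans (hr_gt hy').symm⟩
  rcases lt_trichotomy (g y) t with hy | hy | hy
  · simp [hy, hy.not_gt, hat]
  · simp [hy]
  · simp [hy, hbt]

end SeparatedLevels

/-! ### Monotone functions with prescribed plateaus -/

section Plateau

/-- The strictly increasing function of slope at least `1` that jumps by `w t` at `t`. -/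
noncomputable def jumpSum (w : ℝ → ℝ) (t : ℝ) : ℝ :=
  t + ∑' k, (Iio t).indicator w k

/-- The generalized inverse of `jumpSum w`: a monotone `1`-Lipschitz function which takes the
value `t` on an interval of length `w t`. -/
noncomputable def plateau (w : ℝ → ℝ) (s : ℝ) : ℝ :=
  sSup {t | jumpSum w t ≤ s}

variable {w : ℝ → ℝ} {s t t' : ℝ}

theorem le_jumpSum (hw₀ : 0 ≤ w) : t ≤ jumpSum w t :=
  le_add_of_nonneg_right (tsum_nonneg (indicator_nonneg fun k _ => hw₀ k))

theorem jumpSum_le (hw₀ : 0 ≤ w) (hw : Summable w) : jumpSum w t ≤ t + ∑' k, w k :=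
  add_le_add_right ((hw.indicator _).tsum_le_tsum (indicator_le_self' fun k _ => hw₀ k) hw) t

theorem jumpSum_add_add_sub_le (hw₀ : 0 ≤ w) (hw : Summable w) (htt' : t < t') :
    jumpSum w t + w t + (t' - t) ≤ jumpSum w t' := by
  have hsum : ∑' k, (Iio t).indicator w k + w t = ∑' k, (Iic t).indicator w k := by
    rw [← Iio_union_right, indicator_union_of_disjoint (by simp), (hw.indicator _).tsum_add
      (hw.indicator _), ← tsum_subtype {t} w, tsum_singleton]
  have hle : ∑' k, (Iic t).indicator w k ≤ ∑' k, (Iio t').indicator w k :=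
    (hw.indicator _).tsum_le_tsum
      (indicator_le_indicator_of_subset (Iic_subset_Iio.2 htt') hw₀) (hw.indicator _)
  unfold jumpSum
  linarith

theorem jumpSum_sub_tsum_le (hw₀ : 0 ≤ w) (hw : Summable w) : jumpSum w (s - ∑' k, w k) ≤ s :=
  (jumpSum_le hw₀ hw).trans_eq (sub_add_cancel _ _)

theorem le_plateau (hw₀ : 0 ≤ w) (h : jumpSum w t ≤ s) : t ≤ plateau w s :=
  le_csSup ⟨s, fun _ ht => (le_jumpSum hw₀).trans ht⟩ h

theorem sub_tsum_le_plateau (hw₀ : 0 ≤ w) (hw : Summable w) : s - ∑' k, w k ≤ plateau w s :=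
  le_plateau hw₀ (jumpSum_sub_tsum_le hw₀ hw)

theorem plateau_le (hw₀ : 0 ≤ w) (hw : Summable w) : plateau w s ≤ s :=
  csSup_le ⟨_, jumpSum_sub_tsum_le hw₀ hw⟩ fun _ ht => (le_jumpSum hw₀).trans ht

theorem jumpSum_add_lt_of_lt_plateau (hw₀ : 0 ≤ w) (hw : Summable w) (h : t < plateau w s) :
    jumpSum w t + w t < s := by
  obtain ⟨t', ht', htt'⟩ := exists_lt_of_lt_csSup (s := {t | jumpSum w t ≤ s})
    ⟨_, jumpSum_sub_tsum_le hw₀ hw⟩ h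
  have ht's : jumpSum w t' ≤ s := ht'
  linarith [jumpSum_add_add_sub_le hw₀ hw htt']

theorem plateau_eq (hw₀ : 0 ≤ w) (hw : Summable w)
    (hs : s ∈ Icc (jumpSum w t) (jumpSum w t + w t)) : plateau w s = t :=
  le_antisymm (not_lt.1 fun h => (jumpSum_add_lt_of_lt_plateau hw₀ hw h).not_ge hs.2)
    (le_plateau hw₀ hs.1)

theorem lipschitzWith_plateau (hw₀ : 0 ≤ w) (hw : Summable w) : LipschitzWith 1 (plateau w) := by
  refine LipschitzWith.of_le_add fun s s' => csSup_le ⟨_, jumpSum_sub_tsum_le hw₀ hw⟩ fun t ht => ?_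
  have ht : jumpSum w t ≤ s := ht
  rcases le_or_gt s s' with hss' | hs's
  · exact (le_plateau hw₀ (ht.trans hss')).trans (le_add_of_nonneg_right dist_nonneg)
  · rw [Real.dist_eq, abs_of_pos (sub_pos.2 hs's), ← sub_le_iff_le_add]
    refine le_plateau hw₀ ?_
    linarith [jumpSum_add_add_sub_le hw₀ hw (sub_lt_self t (sub_pos.2 hs's)),
      show 0 ≤ w (t - (s - s')) from hw₀ _]

/-- `plateau w` clamped to `[0, 1]`. -/
noncomputable def unitPlateau (w : ℝ → ℝ) (s : ℝ) : ℝ :=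
  max 0 (min 1 (plateau w s))

theorem unitPlateau_mem_Icc : unitPlateau w s ∈ Icc (0 : ℝ) 1 :=
  ⟨le_max_left _ _, max_le zero_le_one (min_le_left _ _)⟩

theorem lipschitzWith_unitPlateau (hw₀ : 0 ≤ w) (hw : Summable w) :
    LipschitzWith 1 (unitPlateau w) :=
  ((lipschitzWith_plateau hw₀ hw).const_min 1).const_max 0

theorem unitPlateau_lt_iff (ht : t ∈ Ioo (0 : ℝ) 1) : unitPlateau w s < t ↔ plateau w s < t := by
  simp [unitPlateau, ht.1, ht.2.not_gt]

theorem lt_unitPlateau_iff (ht : t ∈ Ioo (0 : ℝ) 1) : t < unitPlateau w s ↔ t < plateau w s := by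
  simp [unitPlateau, ht.1.not_gt, ht.2]

theorem unitPlateau_of_nonpos (hw₀ : 0 ≤ w) (hw : Summable w) (hs : s ≤ 0) :
    unitPlateau w s = 0 :=
  max_eq_left ((min_le_right _ _).trans ((plateau_le hw₀ hw).trans hs))

theorem unitPlateau_of_one_add_tsum_le (hw₀ : 0 ≤ w) (hw : Summable w)
    (hs : 1 + ∑' k, w k ≤ s) : unitPlateau w s = 1 := by
  have : 1 ≤ plateau w s := (le_sub_iff_add_le.2 hs).trans (sub_tsum_le_plateau hw₀ hw)
  simp [unitPlateau, this]

theorem unitPlateau_eq (hw₀ : 0 ≤ w) (hw : Summable w) (ht : t ∈ Icc (0 : ℝ) 1)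
    (hs : s ∈ Icc (jumpSum w t) (jumpSum w t + w t)) : unitPlateau w s = t := by
  simp [unitPlateau, plateau_eq hw₀ hw hs, ht.1, ht.2]

theorem exists_summable_pos_on_countable {T : Set ℝ} (hT : T.Countable) {δ : ℝ} (hδ : 0 < δ) :
    ∃ w : ℝ → ℝ, 0 ≤ w ∧ Summable w ∧ ∑' k, w k ≤ δ ∧ ∀ t ∈ T, 0 < w t := by
  obtain ⟨w, hw, c, hc, hcδ⟩ := hT.exists_pos_hasSum_le hδ
  have hsum : HasSum (T.indicator w) c := hasSum_subtype_iff_indicator.1 hc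
  refine ⟨T.indicator w, indicator_nonneg fun t _ => (hw t).le, hsum.summable,
    hsum.tsum_eq.trans_le hcδ, fun t ht => ?_⟩
  rw [indicator_of_mem ht]
  exact hw t

end Plateau

/-! ### Generalized arcs -/

/-- `g` presents the space as an arc from `c₀` to `c₁`, parametrized by `[0, 1]`, in which
countably many interior points are replaced by nondegenerate fibers. -/
structure IsGeneralizedArc {Y : Type*} [TopologicalSpace Y] (g : Y → ℝ) (c₀ c₁ : Y) : Prop where
  continuous : Continuous g
  mem_Icc : ∀ y, g y ∈ Icc (0 : ℝ) 1
  eq_zero_iff : ∀ y, g y = 0 ↔ y = c₀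
  eq_one_iff : ∀ y, g y = 1 ↔ y = c₁
  countable_nontrivialLevels : (nontrivialLevels g).Countable

theorem isInducing_prodMk_fiberRetraction {Y : Type*} [TopologicalSpace Y] [CompactSpace Y]
    [T2Space Y] {g : Y → ℝ} (hg : Continuous g) {r : ℝ → Y → Y}
    (hr : ∀ t ∈ nontrivialLevels g, IsFiberRetraction g t (r t)) :
    IsInducing fun y => (g y, fun t : nontrivialLevels g => r t y) := by
  have hcont (t : nontrivialLevels g) : Continuous (r t) := (hr t t.2).continuous
  refine (Continuous.isClosedEmbedding (by fun_prop) fun y y' hyy' => ?_).isInducing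
  obtain ⟨hgyy', hryy'⟩ := Prod.mk.inj hyy'
  by_cases hy : g y ∈ nontrivialLevels g
  · have hryy' : r (g y) y = r (g y) y' := congrFun hryy' ⟨g y, hy⟩
    rwa [(hr _ hy).eq_self _ rfl, (hr _ hy).eq_self _ hgyy'.symm] at hryy'
  · exact not_not.1 hy rfl hgyy'.symm

/-- `γ` lies over `unitPlateau w` and, on the plateau at height `t`, follows the image of `β` under
the retraction `r t` onto the fiber over `t`. -/
structure IsPlateauLift {Y : Type*} (g : Y → ℝ) (r : ℝ → Y → Y) (w : ℝ → ℝ) (β γ : ℝ → Y) :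
    Prop where
  apply_eq : ∀ s, g (γ s) = unitPlateau w s
  retraction_apply_eq : ∀ t ∈ nontrivialLevels g, ∀ s,
    r t (γ s) = r t (β ((s - jumpSum w t) / w t))

namespace IsGeneralizedArc

variable {Y : Type*} [TopologicalSpace Y] {g : Y → ℝ} {c₀ c₁ : Y} {t : ℝ}

theorem apply_left (h : IsGeneralizedArc g c₀ c₁) : g c₀ = 0 :=
  (h.eq_zero_iff c₀).2 rfl

theorem apply_right (h : IsGeneralizedArc g c₀ c₁) : g c₁ = 1 :=
  (h.eq_one_iff c₁).2 rfl

theorem nontrivialLevels_subset (h : IsGeneralizedArc g c₀ c₁) :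
    nontrivialLevels g ⊆ Ioo 0 1 := by
  intro t ht
  obtain ⟨y, rfl⟩ : ∃ y, g y = t := by
    by_contra hne
    exact ht fun y hy => absurd ⟨y, hy⟩ hne
  refine ⟨(h.mem_Icc y).1.lt_of_ne fun h0 => ht ?_, (h.mem_Icc y).2.lt_of_ne fun h1 => ht ?_⟩
  · rw [← h0]
    exact fun x hx z hz => ((h.eq_zero_iff x).1 hx).trans ((h.eq_zero_iff z).1 hz).symm
  · rw [h1]
    exact fun x hx z hz => ((h.eq_one_iff x).1 hx).trans ((h.eq_one_iff z).1 hz).symm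

theorem exists_apply_eq [PreconnectedSpace Y] (h : IsGeneralizedArc g c₀ c₁)
    (ht : t ∈ Icc (0 : ℝ) 1) : ∃ y, g y = t :=
  mem_range_of_exists_le_of_exists_ge h.continuous ⟨c₀, h.apply_left.trans_le ht.1⟩
    ⟨c₁, ht.2.trans_eq h.apply_right.symm⟩

theorem exists_isFiberRetraction [T2Space Y] [PreconnectedSpace Y] [LocallyConnectedSpace Y]
    (h : IsGeneralizedArc g c₀ c₁) (ht : t ∈ Ioo (0 : ℝ) 1) : ∃ r, IsFiberRetraction g t r :=
  have : Nonempty Y := ⟨c₀⟩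
  (hasSeparatedLevels_of_countable h.continuous
    h.countable_nontrivialLevels).exists_isFiberRetraction h.continuous
    ⟨c₀, h.apply_left.trans_lt ht.1⟩ ⟨c₁, ht.2.trans_eq h.apply_right.symm⟩

variable {r : ℝ → Y → Y} {w : ℝ → ℝ} {β γ : ℝ → Y}

theorem exists_isPlateauLift [PreconnectedSpace Y] (h : IsGeneralizedArc g c₀ c₁)
    (hr : ∀ t ∈ nontrivialLevels g, IsFiberRetraction g t (r t)) (hw₀ : 0 ≤ w) (hw : Summable w)
    (hwpos : ∀ t ∈ nontrivialLevels g, 0 < w t) (hβ : IsCurve β 1 c₀ c₁) :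
    ∃ γ, IsPlateauLift g r w β γ := by
  choose y hy using fun s => h.exists_apply_eq (unitPlateau_mem_Icc (w := w) (s := s))
  classical
  let γ (s : ℝ) : Y := if unitPlateau w s ∈ nontrivialLevels g then r (unitPlateau w s)
    (β ((s - jumpSum w (unitPlateau w s)) / w (unitPlateau w s))) else y s
  have hγ (s : ℝ) : g (γ s) = unitPlateau w s := by
    by_cases hs : unitPlateau w s ∈ nontrivialLevels g
    · simp only [γ, if_pos hs, (hr _ hs).apply_eq]
    · simp only [γ, if_neg hs, hy]
  refine ⟨γ, hγ, fun t ht s => ?_⟩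
  have ht01 := h.nontrivialLevels_subset ht
  rcases lt_trichotomy (unitPlateau w s) t with hs | rfl | hs
  · have hst : s < jumpSum w t :=
      not_le.1 fun hle => (le_plateau hw₀ hle).not_gt ((unitPlateau_lt_iff ht01).1 hs)
    refine (hr t ht).eq_of_lt _ _ ((hγ s).trans_lt hs) ?_
    rw [hβ.eq_left _ (div_nonpos_of_nonpos_of_nonneg (sub_nonpos.2 hst.le) (hw₀ t)), h.apply_left]
    exact ht01.1
  · simp only [γ, if_pos ht, (hr _ ht).eq_self _ ((hr _ ht).apply_eq _)]
  · have hts := jumpSum_add_lt_of_lt_plateau hw₀ hw ((lt_unitPlateau_iff ht01).1 hs)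
    refine (hr t ht).eq_of_gt _ _ (hs.trans_eq (hγ s).symm) ?_
    rw [hβ.eq_right _ ((one_le_div (hwpos t ht)).2 (by linarith)), h.apply_right]
    exact ht01.2

theorem continuous_of_isPlateauLift [CompactSpace Y] [T2Space Y] (h : IsGeneralizedArc g c₀ c₁)
    (hr : ∀ t ∈ nontrivialLevels g, IsFiberRetraction g t (r t)) (hw₀ : 0 ≤ w) (hw : Summable w)
    (hβ : Continuous β) (hγ : IsPlateauLift g r w β γ) : Continuous γ := by
  have hr_cont (t : nontrivialLevels g) : Continuous (r t) := (hr t t.2).continuous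
  have hk := (lipschitzWith_unitPlateau hw₀ hw).continuous
  have heq : (fun y => (g y, fun t : nontrivialLevels g => r t y)) ∘ γ = fun s =>
      (unitPlateau w s, fun t : nontrivialLevels g => r t (β ((s - jumpSum w t) / w t))) :=
    funext fun s => Prod.ext (hγ.apply_eq s) (funext fun t => hγ.retraction_apply_eq t t.2 s)
  rw [(isInducing_prodMk_fiberRetraction h.continuous hr).continuous_iff, heq]
  fun_prop

theorem isCurve_of_isPlateauLift [CompactSpace Y] [T2Space Y] (h : IsGeneralizedArc g c₀ c₁)
    (hr : ∀ t ∈ nontrivialLevels g, IsFiberRetraction g t (r t)) (hw₀ : 0 ≤ w) (hw : Summable w)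
    (hβ : Continuous β) (hγ : IsPlateauLift g r w β γ) {L : ℝ} (hL : 1 + ∑' t, w t ≤ L) :
    IsCurve γ L c₀ c₁ where
  continuous := h.continuous_of_isPlateauLift hr hw₀ hw hβ hγ
  eq_left s hs := (h.eq_zero_iff _).1 ((hγ.apply_eq s).trans (unitPlateau_of_nonpos hw₀ hw hs))
  eq_right s hs := (h.eq_one_iff _).1
    ((hγ.apply_eq s).trans (unitPlateau_of_one_add_tsum_le hw₀ hw (hL.trans hs)))

theorem surjOn_of_isPlateauLift (h : IsGeneralizedArc g c₀ c₁)
    (hr : ∀ t ∈ nontrivialLevels g, IsFiberRetraction g t (r t)) (hw₀ : 0 ≤ w) (hw : Summable w)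
    (hwpos : ∀ t ∈ nontrivialLevels g, 0 < w t) (hβ : SurjOn β (Icc 0 1) univ)
    (hγ : IsPlateauLift g r w β γ) {L : ℝ} (hL : 1 + ∑' t, w t ≤ L) :
    SurjOn γ (Icc 0 L) univ := by
  intro y _
  obtain ⟨u, hu, rfl⟩ := hβ (mem_univ y)
  set t := g (β u) with ht
  have hsmul : u * w t ∈ Icc 0 (w t) :=
    ⟨mul_nonneg hu.1 (hw₀ t), mul_le_of_le_one_left (hw₀ t) hu.2⟩
  have hs : jumpSum w t + u * w t ∈ Icc (jumpSum w t) (jumpSum w t + w t) :=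
    ⟨by linarith [hsmul.1], by linarith [hsmul.2]⟩
  have hgs : g (γ (jumpSum w t + u * w t)) = t :=
    (hγ.apply_eq _).trans (unitPlateau_eq hw₀ hw (h.mem_Icc _) hs)
  have hplateau := plateau_eq hw₀ hw hs
  refine ⟨jumpSum w t + u * w t, ⟨?_, ?_⟩, ?_⟩
  · linarith [plateau_le hw₀ hw (s := jumpSum w t + u * w t), (h.mem_Icc (β u)).1]
  · linarith [sub_tsum_le_plateau hw₀ hw (s := jumpSum w t + u * w t), (h.mem_Icc (β u)).2]
  by_cases hlevel : t ∈ nontrivialLevels g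
  · have hrt := hγ.retraction_apply_eq t hlevel (jumpSum w t + u * w t)
    rwa [add_sub_cancel_left, mul_div_cancel_right₀ _ (hwpos t hlevel).ne',
      (hr t hlevel).eq_self _ hgs, (hr t hlevel).eq_self _ ht.symm] at hrt
  · exact not_not.1 hlevel hgs ht.symm

theorem exists_isCurve_surjOn {Y : Type*} [MetricSpace Y] [CompactSpace Y] [ConnectedSpace Y]
    [LocallyConnectedSpace Y] {g : Y → ℝ} {c₀ c₁ : Y} (h : IsGeneralizedArc g c₀ c₁) {L : ℝ}
    (hL : 1 < L) :
    ∃ γ, IsCurve γ L c₀ c₁ ∧ LipschitzWith 1 (g ∘ γ) ∧ SurjOn γ (Icc 0 L) univ := by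
  obtain ⟨w, hw₀, hw, hwL, hwpos⟩ :=
    exists_summable_pos_on_countable h.countable_nontrivialLevels (sub_pos.2 hL)
  have hwL : 1 + ∑' t, w t ≤ L := by linarith
  have hr (t : ℝ) (ht : t ∈ nontrivialLevels g) :=
    h.exists_isFiberRetraction (h.nontrivialLevels_subset ht)
  choose! r hr using hr
  obtain ⟨β, hβ, hβsurj⟩ := _root_.exists_isCurve_surjOn c₀ c₁
  obtain ⟨γ, hγ⟩ := h.exists_isPlateauLift hr hw₀ hw hwpos hβ
  refine ⟨γ, h.isCurve_of_isPlateauLift hr hw₀ hw hβ.continuous hγ hwL, ?_,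
    h.surjOn_of_isPlateauLift hr hw₀ hw hwpos hβsurj hγ hwL⟩
  rw [show g ∘ γ = unitPlateau w from funext hγ.apply_eq]
  exact lipschitzWith_unitPlateau hw₀ hw

end IsGeneralizedArc

/-! ### Spaces containing a free generalized arc -/

section FreeArc

/-- The tent function on `[0, 1]`, with peak `1 / 2`. -/
noncomputable def tent (t : ℝ) : ℝ :=
  min t (1 - t)

theorem lipschitzWith_tent : LipschitzWith 1 tent := by
  change LipschitzWith 1 fun t : ℝ => min t (1 - t)
  simpa using LipschitzWith.id.min ((LipschitzWith.const 1).sub LipschitzWith.id)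

theorem tent_mem_Icc {t : ℝ} (ht : t ∈ Icc (0 : ℝ) 1) : tent t ∈ Icc 0 (1 / 2) := by
  refine ⟨le_min ht.1 (sub_nonneg.2 ht.2), ?_⟩
  rcases le_total t (1 / 2) with h | h
  · exact (min_le_left _ _).trans h
  · exact (min_le_right _ _).trans (by linarith)

/-- `j` embeds a generalized arc in such a way that removing its end points leaves an open set. -/
structure IsFreeArc {X Y : Type*} [TopologicalSpace X] [TopologicalSpace Y] (j : Y → X) (g : Y → ℝ)
    (c₀ c₁ : Y) : Prop extends IsGeneralizedArc g c₀ c₁ where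
  isClosedEmbedding : IsClosedEmbedding j
  isOpen_interior : IsOpen (j '' (g ⁻¹' Ioo 0 1))

/-- The complement of an embedded generalized arc, together with the end points of the arc. -/
def arcExterior {X Y : Type*} (j : Y → X) (g : Y → ℝ) : Set X :=
  (j '' (g ⁻¹' Ioo 0 1))ᶜ

theorem compl_range_subset_arcExterior {X Y : Type*} (j : Y → X) (g : Y → ℝ) :
    (range j)ᶜ ⊆ arcExterior j g :=
  compl_subset_compl.2 (image_subset_range _ _)

/-- The distance to the nearest end point along the arc, extended by zero. -/
noncomputable def arcHeight {X Y : Type*} (j : Y → X) (g : Y → ℝ) : X → ℝ :=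
  Function.extend j (tent ∘ g) 0

namespace IsFreeArc

variable {X Y : Type*} [TopologicalSpace X] [TopologicalSpace Y] {j : Y → X} {g : Y → ℝ}
  {c₀ c₁ : Y}

theorem isClosed_arcExterior (h : IsFreeArc j g c₀ c₁) : IsClosed (arcExterior j g) :=
  h.isOpen_interior.isClosed_compl

theorem apply_mem_arcExterior_iff (h : IsFreeArc j g c₀ c₁) {y : Y} :
    j y ∈ arcExterior j g ↔ y = c₀ ∨ y = c₁ := by
  rw [arcExterior, mem_compl_iff, h.isClosedEmbedding.injective.mem_set_image, mem_preimage,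
    mem_Ioo, ← h.eq_zero_iff, ← h.eq_one_iff, (h.mem_Icc y).1.lt_iff_ne,
    (h.mem_Icc y).2.lt_iff_ne]
  tauto

theorem frontier_arcExterior_subset (h : IsFreeArc j g c₀ c₁) :
    frontier (arcExterior j g) ⊆ {j c₀, j c₁} := by
  intro x hx
  by_cases hxj : x ∈ range j
  · obtain ⟨y, rfl⟩ := hxj
    exact (h.apply_mem_arcExterior_iff.1 (h.isClosed_arcExterior.frontier_subset hx)).imp
      (congrArg j) (congrArg j)
  · exact absurd (interior_maximal (compl_range_subset_arcExterior j g)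
      h.isClosedEmbedding.isClosed_range.isOpen_compl hxj) hx.2

theorem arcExterior_ne_univ [PreconnectedSpace Y] (h : IsFreeArc j g c₀ c₁) :
    arcExterior j g ≠ univ := by
  obtain ⟨y, hy⟩ := h.exists_apply_eq (t := 1 / 2) (by norm_num)
  refine fun huniv => huniv.ge (mem_univ (j y)) (mem_image_of_mem j ?_)
  rw [mem_preimage, hy]
  norm_num

theorem arcHeight_apply (h : IsFreeArc j g c₀ c₁) (y : Y) : arcHeight j g (j y) = tent (g y) :=
  h.isClosedEmbedding.injective.extend_apply _ _ _

theorem arcHeight_of_mem_arcExterior (h : IsFreeArc j g c₀ c₁) {x : X}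
    (hx : x ∈ arcExterior j g) : arcHeight j g x = 0 := by
  by_cases hxj : ∃ y, j y = x
  · obtain ⟨y, rfl⟩ := hxj
    rcases h.apply_mem_arcExterior_iff.1 hx with rfl | rfl
    · simp [h.arcHeight_apply, h.apply_left, tent]
    · simp [h.arcHeight_apply, h.apply_right, tent]
  · exact Function.extend_apply' _ _ _ hxj

theorem continuous_arcHeight (h : IsFreeArc j g c₀ c₁) : Continuous (arcHeight j g) := by
  have hcover : range j ∪ arcExterior j g = univ :=
    eq_univ_of_subset (union_subset_union_right _ (compl_range_subset_arcExterior j g))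
      (union_compl_self _)
  rw [← continuousOn_univ, ← hcover]
  refine ContinuousOn.union_of_isClosed ?_ (continuousOn_const.congr fun x =>
    h.arcHeight_of_mem_arcExterior) h.isClosedEmbedding.isClosed_range h.isClosed_arcExterior
  rw [← image_univ, h.isClosedEmbedding.isInducing.continuousOn_image_iff, continuousOn_univ]
  exact (lipschitzWith_tent.continuous.comp h.continuous).congr fun y => (h.arcHeight_apply y).symm

theorem range_arcHeight [PreconnectedSpace Y] (h : IsFreeArc j g c₀ c₁) :
    range (arcHeight j g) = Icc 0 (1 / 2) := by
  refine Subset.antisymm (range_subset_iff.2 fun x => ?_) fun t ht => ?_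
  · by_cases hx : x ∈ arcExterior j g
    · rw [h.arcHeight_of_mem_arcExterior hx]
      norm_num
    · obtain ⟨y, -, rfl⟩ := not_not.1 hx
      exact h.arcHeight_apply y ▸ tent_mem_Icc (h.mem_Icc y)
  · obtain ⟨y, hy⟩ := h.exists_apply_eq (t := t) ⟨ht.1, ht.2.trans (by norm_num)⟩
    refine ⟨j y, ?_⟩
    rw [h.arcHeight_apply, hy, tent, min_eq_left (by linarith [ht.2])]

theorem arcHeight_curveTrans (h : IsFreeArc j g c₀ c₁) {α ω : ℝ → X} {γ : ℝ → Y} {a L : ℝ}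
    (hα : ∀ s, α s ∈ arcExterior j g) (hω : ∀ s, ω s ∈ arcExterior j g)
    (hγ : IsCurve γ L c₀ c₁) (s : ℝ) :
    arcHeight j g (curveTrans (curveTrans α a (j ∘ γ)) (a + L) ω s) = tent (g (γ (s - a))) := by
  unfold curveTrans
  split_ifs with hsL hsa
  · rw [h.arcHeight_of_mem_arcExterior (hα s), hγ.eq_left _ (sub_nonpos.2 hsa), h.apply_left]
    simp [tent]
  · exact h.arcHeight_apply _
  · rw [h.arcHeight_of_mem_arcExterior (hω _), hγ.eq_right _ (by linarith), h.apply_right]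
    simp [tent]

theorem exists_isCurve_surjOn {X Y : Type*} [MetricSpace X] [CompactSpace X] [PreconnectedSpace X]
    [LocallyConnectedSpace X] [MetricSpace Y] [CompactSpace Y] [ConnectedSpace Y]
    [LocallyConnectedSpace Y] {j : Y → X} {g : Y → ℝ} {c₀ c₁ : Y} (h : IsFreeArc j g c₀ c₁)
    {a L : ℝ} (ha : 0 < a) (hL : 1 < L) :
    ∃ Γ, IsCurve Γ (a + L + a) (j c₀) (j c₁) ∧ LipschitzWith 1 (arcHeight j g ∘ Γ) ∧
      SurjOn Γ (Icc 0 (a + L + a)) univ := by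
  have hfin : (frontier (arcExterior j g)).Finite :=
    (toFinite {j c₀, j c₁}).subset h.frontier_arcExterior_subset
  obtain ⟨γ, hγ, hγlip, hγsurj⟩ := h.toIsGeneralizedArc.exists_isCurve_surjOn hL
  obtain ⟨α, hα, hαmem, hαcover⟩ := exists_isCurve_covering_connectedComponentIn
    h.isClosed_arcExterior hfin (h.apply_mem_arcExterior_iff.2 (Or.inl rfl)) ha
  obtain ⟨ω, hω, hωmem, hωcover⟩ := exists_isCurve_covering_connectedComponentIn
    h.isClosed_arcExterior hfin (h.apply_mem_arcExterior_iff.2 (Or.inr rfl)) ha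
  have hjγ := hγ.comp_continuous h.isClosedEmbedding.continuous
  have hL₀ : 0 ≤ L := zero_le_one.trans hL.le
  have hαγ := hα.trans hjγ ha.le hL₀
  refine ⟨_, hαγ.trans hω (add_nonneg ha.le hL₀) ha.le, ?_, fun x _ => ?_⟩
  · have hshift : LipschitzWith 1 fun s : ℝ => s - a :=
      LipschitzWith.of_dist_le_mul fun s s' => by simp
    convert lipschitzWith_tent.comp (hγlip.comp hshift) using 1
    · simp
    · exact funext (h.arcHeight_curveTrans hαmem hωmem hγ)
  refine hαγ.union_image_subset_image_trans hω (add_nonneg ha.le hL₀) ha.le ?_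
  by_cases hx : x ∈ arcExterior j g
  · obtain ⟨c, hc, hxc⟩ := exists_mem_frontier_mem_connectedComponentIn h.isClosed_arcExterior
      h.arcExterior_ne_univ hx
    rcases h.frontier_arcExterior_subset hc with rfl | rfl
    · exact Or.inl (hα.union_image_subset_image_trans hjγ ha.le hL₀ (Or.inl (hαcover hxc)))
    · exact Or.inr (hωcover hxc)
  · obtain ⟨y, -, rfl⟩ := not_not.1 hx
    obtain ⟨s, hs, rfl⟩ := hγsurj (mem_univ y)
    exact Or.inl (hα.union_image_subset_image_trans hjγ ha.le hL₀ (Or.inr ⟨s, hs, rfl⟩))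

theorem witnessingNumberLE_three {X Y : Type*} [MetricSpace X] [CompactSpace X]
    [PreconnectedSpace X] [LocallyConnectedSpace X] [MetricSpace Y] [CompactSpace Y]
    [ConnectedSpace Y] [LocallyConnectedSpace Y] {j : Y → X} {g : Y → ℝ} {c₀ c₁ : Y}
    (h : IsFreeArc j g c₀ c₁) : WitnessingNumberLE X 3 := by
  obtain ⟨Γ, hΓ, hlip, hsurj⟩ := h.exists_isCurve_surjOn (a := 1 / 12) (L := 13 / 12)
    (by norm_num) (by norm_num)
  refine witnessingNumberLE_of_curve (q := 5 / 6) h.continuous_arcHeight h.range_arcHeight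
    (by norm_num) (by norm_num) (by norm_num) (by norm_num) hΓ.continuous hlip ?_
  convert hsurj using 2
  norm_num

end IsFreeArc

end FreeArc

/-! ### Rational chains in uncountable sets of reals -/

section RationalChain

variable {S : Set ℝ}

theorem countable_setOf_exists_countable_inter_Ioo (S : Set ℝ) :
    {s ∈ S | ∃ r > s, (S ∩ Ioo s r).Countable}.Countable := by
  set E : Set ℝ := {s ∈ S | ∃ r > s, (S ∩ Ioo s r).Countable}
  have hE (s : ℝ) : ∃ r, s ∈ E → s < r ∧ (S ∩ Ioo s r).Countable := by
    by_cases hs : s ∈ E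
    · exact hs.2.imp fun _ h _ => h
    · exact ⟨s, fun h => absurd h hs⟩
  choose r hr using hE
  obtain ⟨T, hTE, hT, hTU⟩ := TopologicalSpace.isOpen_biUnion_countable E
    (fun s => Ioo s (r s)) fun _ _ => isOpen_Ioo
  set U : Set ℝ := ⋃ s ∈ E, Ioo s (r s)
  have hSU : (S ∩ U).Countable := by
    rw [← hTU, inter_iUnion₂]
    exact hT.biUnion fun s hs => (hr s (hTE hs)).2
  refine (hSU.union (countable_setOfPred_isolated_right_within (s := E \ U))).mono fun s hs => ?_
  by_cases hsU : s ∈ U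
  · exact Or.inl ⟨hs.1, hsU⟩
  refine Or.inr ⟨⟨hs, hsU⟩, ?_⟩
  rw [← empty_mem_iff_bot, mem_nhdsWithin]
  refine ⟨Iio (r s), isOpen_Iio, (hr s hs).1, fun x ⟨hxr, hx, hsx⟩ => hx.2 ?_⟩
  exact mem_biUnion hs ⟨hsx, hxr⟩

theorem exists_strictMono_rat_of_not_countable (hS : ¬S.Countable) :
    ∃ e : ℚ → ℝ, StrictMono e ∧ ∀ i, e i ∈ S := by
  set E : Set ℝ := {s ∈ S | ∃ r > s, (S ∩ Ioo s r).Countable}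
  have hne {U : Set ℝ} (hU : ¬(S ∩ U).Countable) : ¬((S \ E) ∩ U).Countable := fun hc =>
    hU ((hc.union (countable_setOf_exists_countable_inter_Ioo S)).mono fun s hs =>
      or_iff_not_imp_right.2 fun hsE => ⟨⟨hs.1, hsE⟩, hs.2⟩)
  have hdense : DenselyOrdered ↥(S \ E) := ⟨fun ⟨s, hs⟩ ⟨t, _⟩ hst => by
    have hunc : ¬(S ∩ Ioo s t).Countable := fun hc => hs.2 ⟨hs.1, t, hst, hc⟩
    obtain ⟨x, hx, hsx, hxt⟩ : ((S \ E) ∩ Ioo s t).Nonempty := by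
      by_contra hempty
      exact hne hunc (not_nonempty_iff_eq_empty.1 hempty ▸ countable_empty)
    exact ⟨⟨x, hx⟩, hsx, hxt⟩⟩
  have hnt : Nontrivial ↥(S \ E) := by
    rw [nontrivial_coe_sort, ← not_subsingleton_iff]
    exact fun hsub => hne (U := univ) (by rwa [inter_univ]) (by simpa using hsub.countable)
  obtain ⟨f⟩ := Order.embedding_from_countable_to_dense ℚ ↥(S \ E)
  exact ⟨fun i => f i, fun i j hij => f.strictMono hij, fun i => (f i).2.1⟩

end RationalChain

/-! ### Points separating two given points -/

theorem exists_strictMono_opens_real (V : Type*) [TopologicalSpace V]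
    [SecondCountableTopology V] : ∃ φ : TopologicalSpace.Opens V → ℝ, StrictMono φ := by
  obtain ⟨b, hb, -, hbasis⟩ := TopologicalSpace.exists_countable_basis V
  have := hb.toEncodable
  obtain ⟨w, hw₀, c, hw, -⟩ := posSumOfEncodable one_pos b
  refine ⟨fun A => ∑' i, {i : b | (i : Set V) ⊆ A}.indicator w i, fun A B hAB => ?_⟩
  obtain ⟨x, hxB, hxA⟩ := exists_of_ssubset (SetLike.coe_ssubset_coe.2 hAB)
  obtain ⟨u, hub, hxu, huB⟩ := hbasis.exists_subset_of_mem_open hxB B.isOpen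
  have huA : ¬u ⊆ A := fun huA => hxA (huA hxu)
  refine Summable.tsum_lt_tsum (i := ⟨u, hub⟩) ?_ ?_ (hw.summable.indicator _)
    (hw.summable.indicator _)
  · exact indicator_le_indicator_of_subset (fun i hi => Subset.trans hi hAB.le)
      fun i => (hw₀ i).le
  · simpa [indicator, huA, huB] using hw₀ ⟨u, hub⟩

section SeparatingPoints

variable {V : Type*} [TopologicalSpace V] {p q x y : V}

/-- The component of `p` in the complement of `x`. -/
def sideOf (p x : V) : Set V :=
  connectedComponentIn {x}ᶜ p

/-- The points other than `p` and `q` that lie on every connected set containing `p` and `q`. -/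
def separatingPoints (p q : V) : Set V :=
  {x | p ≠ x ∧ q ≠ x ∧ q ∉ sideOf p x}

/-- The points whose complement is disconnected. -/
def cutPoints (V : Type*) [TopologicalSpace V] : Set V :=
  {x | ¬IsPreconnected ({x}ᶜ : Set V)}

theorem mem_sideOf (hpx : p ≠ x) : p ∈ sideOf p x :=
  mem_connectedComponentIn hpx

theorem notMem_sideOf (p x : V) : x ∉ sideOf p x :=
  fun hx => connectedComponentIn_subset _ _ hx rfl

theorem subset_sideOf {C : Set V} (hC : IsPreconnected C) (hy : y ∈ C) (hyp : y ∈ sideOf p x)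
    (hx : x ∉ C) : C ⊆ sideOf p x := by
  rw [sideOf, connectedComponentIn_eq hyp]
  exact hC.subset_connectedComponentIn hy (subset_compl_singleton_iff.2 hx)

theorem exists_not_countable_separatingPoints [T1Space V] [TopologicalSpace.SeparableSpace V]
    (h : ¬(cutPoints V).Countable) : ∃ p q : V, ¬(separatingPoints p q).Countable := by
  obtain ⟨D, hD, hDdense⟩ := TopologicalSpace.exists_countable_dense V
  by_contra! hc
  refine h ((hD.biUnion fun p _ => hD.biUnion fun q _ => hc p q).mono fun x hx => ?_)
  have hx' : ¬IsPreconnected ({x}ᶜ : Set V) := hx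
  simp only [IsPreconnected, not_forall] at hx'
  obtain ⟨u, v, hu, hv, huv, hxu, hxv, hdisj⟩ := hx'
  obtain ⟨p, hpD, hpx, hpu⟩ :=
    hDdense.exists_mem_open (isOpen_compl_singleton.inter hu) hxu
  obtain ⟨q, hqD, hqx, hqv⟩ :=
    hDdense.exists_mem_open (isOpen_compl_singleton.inter hv) hxv
  refine mem_biUnion hpD (mem_biUnion hqD ⟨hpx, hqx, fun hq => hdisj ?_⟩)
  obtain ⟨z, hz, hzuv⟩ := isPreconnected_connectedComponentIn u v hu hv
    ((connectedComponentIn_subset _ _).trans huv) ⟨p, mem_sideOf hpx, hpu⟩ ⟨q, hq, hqv⟩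
  exact ⟨z, connectedComponentIn_subset _ _ hz, hzuv⟩

variable [T1Space V] [LocallyConnectedSpace V]

theorem isOpen_sideOf (p x : V) : IsOpen (sideOf p x) :=
  isOpen_compl_singleton.connectedComponentIn

theorem closure_sideOf_subset (p x : V) : closure (sideOf p x) ⊆ insert x (sideOf p x) := by
  intro y hy
  refine or_iff_not_imp_left.2 fun hyx => ?_
  obtain ⟨z, hzy, hzp⟩ := mem_closure_iff.1 hy _ (isOpen_sideOf y x) (mem_sideOf hyx)
  exact subset_sideOf isPreconnected_connectedComponentIn hzy hzp (notMem_sideOf y x)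
    (mem_sideOf hyx)

variable [PreconnectedSpace V]

theorem isPreconnected_insert_sideOf (hpx : p ≠ x) : IsPreconnected (insert x (sideOf p x)) := by
  refine isPreconnected_connectedComponentIn.subset_closure (subset_insert _ _)
    (insert_subset ?_ subset_closure)
  by_contra hx
  have hclosed : IsClosed (sideOf p x) := closure_subset_iff_isClosed.1 fun y hy =>
    (closure_sideOf_subset p x hy).resolve_left fun hyx => hx (hyx ▸ hy)
  have huniv := IsClopen.eq_univ ⟨hclosed, isOpen_sideOf p x⟩ ⟨p, mem_sideOf hpx⟩
  exact notMem_sideOf p x (huniv ▸ mem_univ x)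

theorem insert_sideOf_subset_of_notMem (hpy : p ≠ y) (hxy : x ≠ y) (hx : x ∉ sideOf p y) :
    insert y (sideOf p y) ⊆ sideOf p x :=
  have hpx : p ≠ x := fun hpx => hx (hpx ▸ mem_sideOf hpy)
  subset_sideOf (isPreconnected_insert_sideOf hpy) (mem_insert_of_mem _ (mem_sideOf hpy))
    (mem_sideOf hpx) fun h => h.elim hxy hx

theorem insert_sideOf_subset_or (hx : x ∈ separatingPoints p q) (hy : y ∈ separatingPoints p q)
    (hxy : x ≠ y) :
    insert x (sideOf p x) ⊆ sideOf p y ∨ insert y (sideOf p y) ⊆ sideOf p x := by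
  by_contra! hnot
  have hxy' : x ∈ sideOf p y := by
    by_contra h
    exact hnot.2 (insert_sideOf_subset_of_notMem hy.1 hxy h)
  have hyx' : y ∈ sideOf p x := by
    by_contra h
    exact hnot.1 (insert_sideOf_subset_of_notMem hx.1 hxy.symm h)
  have hclosed : IsClosed (sideOf p x ∪ sideOf p y) := by
    refine closure_subset_iff_isClosed.1 ?_
    rw [closure_union]
    exact union_subset
      ((closure_sideOf_subset p x).trans (insert_subset (Or.inr hxy') subset_union_left))
      ((closure_sideOf_subset p y).trans (insert_subset (Or.inl hyx') subset_union_right))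
  have huniv := IsClopen.eq_univ ⟨hclosed, (isOpen_sideOf p x).union (isOpen_sideOf p y)⟩
    ⟨x, Or.inr hxy'⟩
  exact (huniv.ge (mem_univ q)).elim hx.2.2 hy.2.2

theorem exists_rat_chain_of_not_countable_separatingPoints [SecondCountableTopology V]
    (h : ¬(separatingPoints p q).Countable) :
    ∃ e : ℚ → V, (∀ i, e i ∈ separatingPoints p q) ∧
      ∀ i j, i < j → insert (e i) (sideOf p (e i)) ⊆ sideOf p (e j) := by
  obtain ⟨φ, hφ⟩ := exists_strictMono_opens_real V
  let ψ (x : V) : ℝ := φ ⟨sideOf p x, isOpen_sideOf p x⟩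
  have hψ {x y : V} (hxy : insert x (sideOf p x) ⊆ sideOf p y) : ψ x < ψ y :=
    hφ (SetLike.coe_ssubset_coe.1 ((ssubset_insert (notMem_sideOf p x)).trans_subset hxy))
  have hinj : InjOn ψ (separatingPoints p q) := fun x hx y hy hxy => by
    by_contra hne
    exact (insert_sideOf_subset_or hx hy hne).elim (fun h => (hψ h).ne hxy)
      fun h => (hψ h).ne' hxy
  obtain ⟨e, he, heψ⟩ := exists_strictMono_rat_of_not_countable fun hc =>
    h (countable_of_injective_of_countable_image hinj hc)
  choose f hf hfe using heψ
  have hlt {i j : ℚ} (hij : i < j) : ψ (f i) < ψ (f j) := by simpa only [hfe] using he hij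
  exact ⟨f, hf, fun i j hij => (insert_sideOf_subset_or (hf i) (hf j)
    fun heq => (hlt hij).ne (congrArg ψ heq)).resolve_right fun h => (hlt hij).not_gt (hψ h)⟩

end SeparatingPoints

section ChainHeight

variable {V : Type*} {A : ℚ → Set V} {i : ℚ} {y : V}

/-- The Urysohn function of a chain of sets `A i` indexed by the rationals: the infimum of `1`
and of the indices `i > 0` with `y ∈ A i`. -/
noncomputable def chainHeight (A : ℚ → Set V) (y : V) : ℝ :=
  sInf (insert 1 ((↑) '' {i : ℚ | 0 < i ∧ y ∈ A i}))

theorem zero_mem_lowerBounds_insert_one (A : ℚ → Set V) (y : V) :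
    (0 : ℝ) ∈ lowerBounds (insert 1 ((↑) '' {i : ℚ | 0 < i ∧ y ∈ A i})) := by
  rintro b (rfl | ⟨i, hi, rfl⟩)
  · exact zero_le_one
  · exact Rat.cast_nonneg.2 hi.1.le

theorem chainHeight_mem_Icc (A : ℚ → Set V) (y : V) : chainHeight A y ∈ Icc (0 : ℝ) 1 :=
  ⟨le_csInf (insert_nonempty _ _) (zero_mem_lowerBounds_insert_one A y),
    csInf_le ⟨0, zero_mem_lowerBounds_insert_one A y⟩ (mem_insert _ _)⟩

theorem chainHeight_le (hi : 0 < i) (hy : y ∈ A i) : chainHeight A y ≤ i :=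
  csInf_le ⟨0, zero_mem_lowerBounds_insert_one A y⟩ (Or.inr ⟨i, ⟨hi, hy⟩, rfl⟩)

theorem exists_rat_of_chainHeight_lt {c : ℝ} (hc : c ≤ 1) (hy : chainHeight A y < c) :
    ∃ i : ℚ, 0 < i ∧ (i : ℝ) < c ∧ y ∈ A i := by
  obtain ⟨b, rfl | ⟨i, hi, rfl⟩, hbc⟩ := exists_lt_of_csInf_lt (insert_nonempty _ _) hy
  · exact absurd hbc hc.not_gt
  · exact ⟨i, hi.1, hbc, hi.2⟩

theorem mem_of_chainHeight_lt (hA : Monotone A) (hi : i ≤ 1) (hy : chainHeight A y < i) :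
    y ∈ A i := by
  obtain ⟨k, -, hki, hyk⟩ := exists_rat_of_chainHeight_lt (mod_cast hi) hy
  exact hA (mod_cast hki.le) hyk

theorem chainHeight_eq_zero (hy : ∀ i, y ∈ A i) : chainHeight A y = 0 := by
  by_contra hne
  obtain ⟨i, hi₀, hi⟩ := exists_rat_btwn ((chainHeight_mem_Icc A y).1.lt_of_ne' hne)
  exact (chainHeight_le (Rat.cast_pos.1 hi₀) (hy i)).not_gt hi

theorem chainHeight_eq_one (hy : ∀ i, y ∉ A i) : chainHeight A y = 1 := by
  by_contra hne
  obtain ⟨i, -, -, hi⟩ := exists_rat_of_chainHeight_lt le_rfl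
    ((chainHeight_mem_Icc A y).2.lt_of_ne hne)
  exact hy i hi

theorem continuous_chainHeight [TopologicalSpace V] (hopen : ∀ i, IsOpen (A i))
    (hA : ∀ i j, i < j → closure (A i) ⊆ A j) : Continuous (chainHeight A) := by
  have hmono : Monotone A := monotone_iff_forall_lt.2 fun i j hij =>
    subset_closure.trans (hA i j hij)
  refine continuous_iff_continuousAt.2 fun y => tendsto_order.2 ⟨fun c hc => ?_, fun c hc => ?_⟩
  · rcases lt_or_ge c 0 with hc₀ | hc₀
    · exact Eventually.of_forall fun z => hc₀.trans_le (chainHeight_mem_Icc A z).1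
    obtain ⟨k, hck, hk⟩ := exists_rat_btwn hc
    obtain ⟨l, hkl, hl⟩ := exists_rat_btwn hk
    have hk₀ : 0 < k := Rat.cast_pos.1 (hc₀.trans_lt hck)
    have hkl : k < l := Rat.cast_lt.1 hkl
    have hy : y ∉ closure (A k) := fun hy =>
      (chainHeight_le (hk₀.trans hkl) (hA k l hkl hy)).not_gt hl
    have hk₁ : (k : ℝ) ≤ 1 := hk.le.trans (chainHeight_mem_Icc A y).2
    filter_upwards [isClosed_closure.isOpen_compl.mem_nhds hy] with z hz
    exact hck.trans_le (not_lt.1 fun hzk => hz (subset_closure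
      (mem_of_chainHeight_lt hmono (mod_cast hk₁) hzk)))
  · rcases lt_or_ge 1 c with hc₁ | hc₁
    · exact Eventually.of_forall fun z => (chainHeight_mem_Icc A z).2.trans_lt hc₁
    obtain ⟨k, hk₀, hkc, hyk⟩ := exists_rat_of_chainHeight_lt hc₁ hc
    filter_upwards [(hopen k).mem_nhds hyk] with z hz
    exact (chainHeight_le hk₀ hz).trans_lt hkc

theorem hasSeparatedLevels_chainHeight_sideOf [TopologicalSpace V] {p : V} {e : ℚ → V}
    (hmono : Monotone fun i => sideOf p (e i)) :
    HasSeparatedLevels (chainHeight fun i => sideOf p (e i)) := by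
  intro s t hst
  by_cases hs : 0 ≤ s ∧ t ≤ 1
  · obtain ⟨i, hsi, hit⟩ := exists_rat_btwn hst
    refine ⟨e i, fun C hC ⟨x, hxC, hx⟩ ⟨y, hyC, hy⟩ => ?_⟩
    by_contra hiC
    have hxi : x ∈ sideOf p (e i) :=
      mem_of_chainHeight_lt hmono (mod_cast hit.le.trans hs.2) (hx.trans_lt hsi)
    have hyi : y ∈ sideOf p (e i) := subset_sideOf hC hxC hxi hiC hyC
    exact ((chainHeight_le (mod_cast hs.1.trans_lt hsi) hyi).trans_lt hit).not_ge hy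
  · refine ⟨p, fun C _ ⟨x, _, hx⟩ ⟨y, _, hy⟩ => absurd ⟨?_, ?_⟩ hs⟩
    · exact (chainHeight_mem_Icc _ x).1.trans hx
    · exact hy.trans (chainHeight_mem_Icc _ y).2

theorem exists_continuous_hasSeparatedLevels [TopologicalSpace V] [T1Space V]
    [PreconnectedSpace V] [LocallyConnectedSpace V] [SecondCountableTopology V]
    (h : ¬(cutPoints V).Countable) :
    ∃ g : V → ℝ, Continuous g ∧ HasSeparatedLevels g ∧ ∃ a b, g a < g b := by
  obtain ⟨p, q, hpq⟩ := exists_not_countable_separatingPoints h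
  obtain ⟨e, he, hchain⟩ := exists_rat_chain_of_not_countable_separatingPoints hpq
  have hmono : Monotone fun i => sideOf p (e i) := monotone_iff_forall_lt.2 fun i j hij =>
    (subset_insert _ _).trans (hchain i j hij)
  refine ⟨_, continuous_chainHeight (fun i => isOpen_sideOf p (e i)) fun i j hij =>
    (closure_sideOf_subset p (e i)).trans (hchain i j hij),
    hasSeparatedLevels_chainHeight_sideOf hmono, p, q, ?_⟩
  rw [chainHeight_eq_zero fun i => mem_sideOf (he i).1, chainHeight_eq_one fun i => (he i).2.2]
  exact one_pos

end ChainHeight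

/-! ### Bands of levels -/

section Band

variable {Y : Type*} {g : Y → ℝ} {s t : ℝ} {c₀ c₁ : Y}

/-- The band `g ⁻¹' Icc s t` is nondegenerate and meets its two extreme levels in the single points
`c₀` and `c₁`. -/
structure IsBand (g : Y → ℝ) (s t : ℝ) (c₀ c₁ : Y) : Prop where
  lt : s < t
  fiber_left : g ⁻¹' {s} = {c₀}
  fiber_right : g ⁻¹' {t} = {c₁}

namespace IsBand

theorem apply_left (h : IsBand g s t c₀ c₁) : g c₀ = s :=
  h.fiber_left.ge rfl

theorem apply_right (h : IsBand g s t c₀ c₁) : g c₁ = t :=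
  h.fiber_right.ge rfl

theorem left_mem (h : IsBand g s t c₀ c₁) : c₀ ∈ g ⁻¹' Icc s t :=
  ⟨h.apply_left.ge, h.apply_left.trans_le h.lt.le⟩

theorem right_mem (h : IsBand g s t c₀ c₁) : c₁ ∈ g ⁻¹' Icc s t :=
  ⟨h.lt.le.trans_eq h.apply_right.symm, h.apply_right.le⟩

variable [TopologicalSpace Y]

theorem frontier_preimage_subset (h : IsBand g s t c₀ c₁) (hg : Continuous g) :
    frontier (g ⁻¹' Icc s t) ⊆ {c₀, c₁} := by
  refine (hg.frontier_preimage_subset _).trans_eq ?_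
  rw [frontier_Icc h.lt.le, insert_eq, preimage_union, h.fiber_left, h.fiber_right, insert_eq]

theorem isPreconnected_preimage [PreconnectedSpace Y] (h : IsBand g s t c₀ c₁)
    (hg : Continuous g) : IsPreconnected (g ⁻¹' Icc s t) := by
  have hfrIci : univ ∩ frontier (g ⁻¹' Ici s) ⊆ {c₀} := by
    simpa [h.fiber_left] using hg.frontier_preimage_subset (Ici s)
  have hfrIic : frontier (g ⁻¹' Iic t) ⊆ {c₁} := by
    simpa [h.fiber_right] using hg.frontier_preimage_subset (Iic t)
  have hIci := isPreconnected_inter_of_frontier_subset_singleton isPreconnected_univ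
    (isClosed_Ici.preimage hg) (mem_univ c₀) h.left_mem.1 hfrIci
  rw [univ_inter] at hIci
  exact isPreconnected_inter_of_frontier_subset_singleton hIci (isClosed_Iic.preimage hg)
    h.right_mem.1 h.right_mem.2 (inter_subset_right.trans hfrIic)

theorem isGeneralizedArc (h : IsBand g s t c₀ c₁) (hg : Continuous g)
    (hcount : (nontrivialLevels g).Countable) :
    IsGeneralizedArc (fun y : g ⁻¹' Icc s t => (g y - s) / (t - s)) ⟨c₀, h.left_mem⟩
      ⟨c₁, h.right_mem⟩ where
  continuous := by fun_prop
  mem_Icc y := ⟨div_nonneg (sub_nonneg.2 y.2.1) (sub_pos.2 h.lt).le,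
    (div_le_one (sub_pos.2 h.lt)).2 (sub_le_sub_right y.2.2 s)⟩
  eq_zero_iff y := by
    rw [div_eq_zero_iff, or_iff_left (sub_pos.2 h.lt).ne', sub_eq_zero, Subtype.ext_iff]
    exact Set.ext_iff.1 h.fiber_left y
  eq_one_iff y := by
    rw [div_eq_one_iff_eq (sub_pos.2 h.lt).ne', sub_left_inj, Subtype.ext_iff]
    exact Set.ext_iff.1 h.fiber_right y
  countable_nontrivialLevels := by
    have hst : t - s ≠ 0 := (sub_pos.2 h.lt).ne'
    refine (hcount.preimage_of_injOn (f := fun u => u * (t - s) + s) ?_).mono ?_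
    · exact fun u _ v _ huv => mul_right_cancel₀ hst (add_right_cancel huv)
    · refine fun u hu hsub => hu fun x hx y hy => Subtype.ext (hsub ?_ ?_)
      exacts [eq_add_of_sub_eq ((div_eq_iff hst).1 hx), eq_add_of_sub_eq ((div_eq_iff hst).1 hy)]

theorem isFreeArc {X : Type*} [TopologicalSpace X] [T2Space X] {j : Y → X}
    (h : IsBand g s t c₀ c₁) (hj : IsOpenEmbedding j) (hg : Continuous g)
    (hcount : (nontrivialLevels g).Countable) (hcomp : IsCompact (g ⁻¹' Icc s t)) :
    IsFreeArc (fun y : g ⁻¹' Icc s t => j y) (fun y => (g y - s) / (t - s)) ⟨c₀, h.left_mem⟩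
      ⟨c₁, h.right_mem⟩ where
  toIsGeneralizedArc := h.isGeneralizedArc hg hcount
  isClosedEmbedding :=
    have : CompactSpace (g ⁻¹' Icc s t) := isCompact_iff_compactSpace.1 hcomp
    (hj.continuous.comp continuous_subtype_val).isClosedEmbedding
      (hj.injective.comp Subtype.val_injective)
  isOpen_interior := by
    have hmem (y : Y) : (g y - s) / (t - s) ∈ Ioo (0 : ℝ) 1 ↔ g y ∈ Ioo s t := by
      rw [mem_Ioo, div_pos_iff_of_pos_right (sub_pos.2 h.lt), div_lt_one (sub_pos.2 h.lt), sub_pos,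
        sub_lt_sub_iff_right, mem_Ioo]
    convert hj.isOpenMap _ (isOpen_Ioo.preimage hg (t := Ioo s t)) using 1
    ext x
    constructor
    · rintro ⟨y, hy, rfl⟩
      exact ⟨y, (hmem y).1 hy, rfl⟩
    · rintro ⟨y, hy, rfl⟩
      exact ⟨⟨y, Ioo_subset_Icc_self hy⟩, (hmem y).2 hy, rfl⟩

end IsBand

variable [TopologicalSpace Y]

theorem exists_pos_forall_isCompact_preimage_Icc [T2Space Y] [LocallyCompactSpace Y]
    (hg : Continuous g) {r : ℝ} {c : Y} (hrc : g ⁻¹' {r} = {c}) :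
    ∃ η > 0, ∀ s ∈ Ioo (r - η) r, ∀ t ∈ Ioo r (r + η), IsPreconnected (g ⁻¹' Icc s t) →
      IsCompact (g ⁻¹' Icc s t) := by
  obtain ⟨N, hN, hcN⟩ := exists_compact_mem_nhds c
  have hc : c ∈ interior N := mem_interior_iff_mem_nhds.2 hcN
  have hfr : IsCompact (frontier N) :=
    hN.of_isClosed_subset isClosed_frontier hN.isClosed.frontier_subset
  obtain ⟨η, hη, hηN⟩ := hfr.exists_forall_le' (f := fun y => |g y - r|) (a := 0) (by fun_prop)
    fun y hy => abs_pos.2 <| sub_ne_zero.2 fun hyr => hy.2 (hrc.le hyr ▸ hc)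
  refine ⟨η, hη, fun s hs t ht hconn => ?_⟩
  have hcover : g ⁻¹' Icc s t ⊆ interior N ∪ Nᶜ := fun y hy => by
    refine or_iff_not_imp_left.2 fun hyint hyN => ?_
    have hyr : |g y - r| < η :=
      abs_sub_lt_iff.2 ⟨by linarith [hy.2, ht.2], by linarith [hy.1, hs.1]⟩
    exact (hηN y ⟨subset_closure hyN, hyint⟩).not_gt hyr
  have hcband : c ∈ g ⁻¹' Icc s t := by
    rw [mem_preimage, show g c = r from hrc.ge rfl]
    exact ⟨hs.2.le, ht.1.le⟩
  have hsub : g ⁻¹' Icc s t ⊆ interior N :=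
    hconn.subset_left_of_subset_union isOpen_interior hN.isClosed.isOpen_compl
      (disjoint_compl_right.mono_left interior_subset) hcover ⟨c, hcband, hc⟩
  exact hN.of_isClosed_subset (isClosed_Icc.preimage hg) (hsub.trans interior_subset)

variable [PreconnectedSpace Y]

theorem exists_fiber_eq_singleton (hg : Continuous g) (hcount : (nontrivialLevels g).Countable)
    (hst : s < t) (hs : ∃ y, g y ≤ s) (ht : ∃ y, t ≤ g y) :
    ∃ r ∈ Ioo s t, ∃ c, g ⁻¹' {r} = {c} := by
  obtain ⟨r, hr, hsr, hrt⟩ := (hcount.dense_compl ℝ).exists_between hst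
  obtain ⟨c, hc⟩ := mem_range_of_exists_le_of_exists_ge hg (hs.imp fun _ h => h.trans hsr.le)
    (ht.imp fun _ h => hrt.le.trans h)
  exact ⟨r, ⟨hsr, hrt⟩, c, (not_not.1 hr).eq_singleton_of_mem hc⟩

theorem exists_isBand_isCompact [T2Space Y] [LocallyCompactSpace Y] (hg : Continuous g)
    (hcount : (nontrivialLevels g).Countable) {a b : Y} (hab : g a < g b) :
    ∃ s t c₀ c₁, IsBand g s t c₀ c₁ ∧ IsCompact (g ⁻¹' Icc s t) := by
  obtain ⟨r, ⟨har, hrb⟩, c, hrc⟩ := exists_fiber_eq_singleton hg hcount hab ⟨a, le_rfl⟩ ⟨b, le_rfl⟩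
  obtain ⟨η, hη, hcomp⟩ := exists_pos_forall_isCompact_preimage_Icc hg hrc
  have hgc : g c = r := hrc.ge rfl
  obtain ⟨s, hs, c₀, hc₀⟩ := exists_fiber_eq_singleton hg hcount
    (max_lt har (sub_lt_self r hη)) ⟨a, le_max_left _ _⟩ ⟨c, hgc.ge⟩
  obtain ⟨t, ht, c₁, hc₁⟩ := exists_fiber_eq_singleton hg hcount
    (lt_min hrb (lt_add_of_pos_right r hη)) ⟨c, hgc.le⟩ ⟨b, min_le_left _ _⟩
  have hband : IsBand g s t c₀ c₁ := ⟨hs.2.trans ht.1, hc₀, hc₁⟩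
  exact ⟨s, t, c₀, c₁, hband, hcomp s ⟨(max_lt_iff.1 hs.1).2, hs.2⟩ t
    ⟨ht.1, (lt_min_iff.1 ht.2).2⟩ (hband.isPreconnected_preimage hg)⟩

theorem HasSeparatedLevels.witnessingNumberLE_three {X : Type*} [MetricSpace X] [CompactSpace X]
    [PreconnectedSpace X] [LocallyConnectedSpace X] {V : Set X} [PreconnectedSpace V] {g : V → ℝ}
    (h : HasSeparatedLevels g) (hV : IsOpen V) (hg : Continuous g) {a b : V} (hab : g a < g b) :
    WitnessingNumberLE X 3 := by
  have : LocallyConnectedSpace V := hV.locallyConnectedSpace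
  have : LocallyCompactSpace V := hV.locallyCompactSpace
  have hcount := h.countable_nontrivialLevels hg
  obtain ⟨s, t, c₀, c₁, hband, hcomp⟩ := exists_isBand_isCompact hg hcount hab
  have : CompactSpace (g ⁻¹' Icc s t) := isCompact_iff_compactSpace.1 hcomp
  have : ConnectedSpace (g ⁻¹' Icc s t) := isConnected_iff_connectedSpace.1
    ⟨⟨c₀, hband.left_mem⟩, hband.isPreconnected_preimage hg⟩
  have : LocallyConnectedSpace (g ⁻¹' Icc s t) := locallyConnectedSpace_of_finite_frontier
    hcomp.isClosed ((toFinite {c₀, c₁}).subset (hband.frontier_preimage_subset hg))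
  exact (hband.isFreeArc hV.isOpenEmbedding_subtypeVal hg hcount hcomp).witnessingNumberLE_three

end Band

/-! ### Local cut points -/

section LocalCutPoints

variable {X : Type*} [TopologicalSpace X]

theorem image_val_cutPoints (W : Set X) :
    (↑) '' cutPoints W = {x ∈ W | ¬IsPreconnected (W \ {x})} := by
  ext x
  have hcompl (y : W) : ((↑) '' ({y}ᶜ : Set W) : Set X) = W \ {(y : X)} := by
    rw [image_compl_eq_range_sdiff_image Subtype.val_injective, Subtype.range_coe, image_singleton]
  constructor
  · rintro ⟨y, hy, rfl⟩
    refine ⟨y.2, ?_⟩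
    rwa [← hcompl, IsInducing.subtypeVal.isPreconnected_image]
  · rintro ⟨hxW, hx⟩
    refine ⟨⟨x, hxW⟩, ?_, rfl⟩
    rwa [← hcompl ⟨x, hxW⟩, IsInducing.subtypeVal.isPreconnected_image] at hx

variable [T1Space X]

theorem not_isPreconnected_sdiff_singleton_of_subset {U W : Set X} {x : X} (hU : IsPreconnected U)
    (hUx : ¬IsPreconnected (U \ {x})) (hW : W ∈ 𝓝 x) (hWU : W ⊆ U) :
    ¬IsPreconnected (W \ {x}) := by
  intro hWx
  have key : ∀ u v : Set X, IsOpen u → IsOpen v → U \ {x} ⊆ u ∪ v → (U \ {x}) ∩ (u ∩ v) = ∅ →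
      W \ {x} ⊆ u → U \ {x} ⊆ u := by
    intro u v hu hv huv hdisj hWu
    have hxu {y : X} (hyx : y ≠ x) : y ∈ u ∪ interior W → y ∈ u :=
      Or.rec id fun hyW => hWu ⟨interior_subset hyW, hyx⟩
    have hcover : U ⊆ (u ∪ interior W) ∪ (v ∩ {x}ᶜ) := fun y hy => by
      by_cases hyx : y = x
      · exact Or.inl (Or.inr (hyx ▸ mem_interior_iff_mem_nhds.2 hW))
      · exact (huv ⟨hy, hyx⟩).imp Or.inl fun h => ⟨h, hyx⟩
    have hempty : U ∩ ((u ∪ interior W) ∩ (v ∩ {x}ᶜ)) = ∅ :=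
      eq_empty_of_forall_notMem fun y ⟨hyU, hy, hyv, hyx⟩ =>
        hdisj.subset ⟨⟨hyU, hyx⟩, hxu hyx hy, hyv⟩
    rcases isPreconnected_iff_subset_of_disjoint.1 hU _ _ (hu.union isOpen_interior)
      (hv.inter isOpen_compl_singleton) hcover hempty with h | h
    · exact fun y hy => hxu hy.2 (h hy.1)
    · exact absurd rfl (h (hWU (mem_of_mem_nhds hW))).2
  refine hUx (isPreconnected_iff_subset_of_disjoint.2 fun u v hu hv huv hdisj => ?_)
  have hWU' : W \ {x} ⊆ U \ {x} := sdiff_subset_sdiff_left hWU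
  rcases isPreconnected_iff_subset_of_disjoint.1 hWx u v hu hv (hWU'.trans huv)
    (subset_empty_iff.1 ((inter_subset_inter_left _ hWU').trans hdisj.subset)) with h | h
  · exact Or.inl (key u v hu hv huv hdisj h)
  · exact Or.inr (key v u hv hu (by rwa [union_comm]) (by rwa [inter_comm v]) h)

theorem exists_isOpen_not_countable_cutPoints [SecondCountableTopology X]
    [LocallyConnectedSpace X] (h : ¬{x : X | IsLocalCutPoint x}.Countable) :
    ∃ V : Set X, IsOpen V ∧ IsPreconnected V ∧ ¬(cutPoints V).Countable := by
  obtain ⟨b, hbsub, hb, hbasis⟩ :=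
    TopologicalSpace.IsTopologicalBasis.isOpen_isPreconnected.exists_countable (α := X)
  by_contra! hc
  have hcount (W : Set X) (hW : W ∈ b) : {x ∈ W | ¬IsPreconnected (W \ {x})}.Countable :=
    image_val_cutPoints W ▸ (hc W (hbsub hW).1 (hbsub hW).2).image _
  refine h ((hb.biUnion hcount).mono fun x ⟨U, hUx, hU, hcut⟩ => ?_)
  obtain ⟨W, hWb, hxW, hWU⟩ := hbasis.mem_nhds_iff.1 hUx
  exact mem_biUnion hWb ⟨hxW, not_isPreconnected_sdiff_singleton_of_subset hU.isPreconnected hcut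
    ((hbsub hWb).1.mem_nhds hxW) hWU⟩

end LocalCutPoints

/-- Every Peano continuum with uncountably many local cut points is a topological
fractal, witnessed by a family of at most three maps. -/
theorem peano_uncountably_many_local_cut_points_is_topological_fractal
    (X : Type*) [MetricSpace X] [CompactSpace X] [ConnectedSpace X]
    [LocallyConnectedSpace X] [Nonempty X]
    (h : ¬ ({x : X | IsLocalCutPoint x}).Countable) :
    ∃ F : Set (X → X), F.Finite ∧ F.ncard ≤ 3 ∧ (∀ f ∈ F, Continuous f) ∧
      TopContractive F ∧ (⋃ f ∈ F, Set.range f) = Set.univ := by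
  obtain ⟨V, hV, hVconn, hcut⟩ := exists_isOpen_not_countable_cutPoints h
  have : PreconnectedSpace V := isPreconnected_iff_preconnectedSpace.1 hVconn
  have : LocallyConnectedSpace V := hV.locallyConnectedSpace
  obtain ⟨g, hg, hsep, a, b, hab⟩ := exists_continuous_hasSeparatedLevels hcut
  exact hsep.witnessingNumberLE_three hV hg hab
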